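/- Let A be an artin algebra. Assume every simple module S is a submodule of a finitely generated module M_S of finite projective dimension and also a factor module of a finitely generated module N_S of finite injective dimension. Let d = max over simple S of pd M_S and d' = max over simple S of id N_S. Then fin-pro A = fin-inj A = Fin-pro A = Fin-inj A = del A = des A = d = d'. -/

import Mathlib

open CategoryTheory CategoryTheory.Limits

noncomputable section

namespace ArtinAlg

variable (A : Type) [Ring A]

/-- `M` admits a projective resolution of length at most `n`. -/
inductive ProjDimLE : ℕ → ModuleCat.{0} A → Prop
  | zero (M : ModuleCat.{0} A) (h : Projective M) : ProjDimLE 0 M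
  | succ (n : ℕ) (M P : ModuleCat.{0} A) (f : P ⟶ M) (hP : Projective P) (hf : Epi f)
      (h : ProjDimLE n (kernel f)) : ProjDimLE (n + 1) M

/-- `M` admits an injective coresolution of length at most `n`. -/
inductive InjDimLE : ℕ → ModuleCat.{0} A → Prop
  | zero (M : ModuleCat.{0} A) (h : Injective M) : InjDimLE 0 M
  | succ (n : ℕ) (M I : ModuleCat.{0} A) (f : M ⟶ I) (hI : Injective I) (hf : Mono f)
      (h : InjDimLE n (cokernel f)) : InjDimLE (n + 1) M

/-- The projective dimension `pd M ∈ ℕ∞`. -/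
def projDim (M : ModuleCat.{0} A) : ℕ∞ :=
  sInf {d : ℕ∞ | ∃ n : ℕ, d = n ∧ ProjDimLE A n M}

/-- The injective dimension `id M ∈ ℕ∞`. -/
def injDim (M : ModuleCat.{0} A) : ℕ∞ :=
  sInf {d : ℕ∞ | ∃ n : ℕ, d = n ∧ InjDimLE A n M}

/-- `f : P ⟶ M` is a projective cover: `P` is projective and `f` is an essential
(superfluous) epimorphism. -/
def IsProjectiveCoverHom {P M : ModuleCat.{0} A} (f : P ⟶ M) : Prop :=
  Projective P ∧ Epi f ∧ ∀ (N : ModuleCat.{0} A) (g : N ⟶ P), Epi (g ≫ f) → Epi g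

/-- `P` is a projective cover of `M`. -/
def IsProjCoverOf (M P : ModuleCat.{0} A) : Prop :=
  ∃ f : P ⟶ M, IsProjectiveCoverHom A f

/-- `f : M ⟶ I` is an injective envelope: `I` is injective and `f` is an essential
monomorphism. -/
def IsInjectiveEnvelopeHom {M I : ModuleCat.{0} A} (f : M ⟶ I) : Prop :=
  Injective I ∧ Mono f ∧ ∀ (N : ModuleCat.{0} A) (g : I ⟶ N), Mono (f ≫ g) → Mono g

/-- `I` is an injective envelope of `M`. -/
def IsInjEnvOf (M I : ModuleCat.{0} A) : Prop :=
  ∃ f : M ⟶ I, IsInjectiveEnvelopeHom A f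

/-- `X ≅ Ω M`, the kernel of a projective cover of `M`. -/
def IsSyzygyOf (M X : ModuleCat.{0} A) : Prop :=
  ∃ (P : ModuleCat.{0} A) (f : P ⟶ M), IsProjectiveCoverHom A f ∧ Nonempty (X ≅ kernel f)

/-- `X ≅ Σ M`, the cokernel of an injective envelope of `M`. -/
def IsCosyzygyOf (M X : ModuleCat.{0} A) : Prop :=
  ∃ (I : ModuleCat.{0} A) (f : M ⟶ I), IsInjectiveEnvelopeHom A f ∧ Nonempty (X ≅ cokernel f)

/-- `X ≅ Ω^n M`. -/
def IsNthSyzygy : ℕ → ModuleCat.{0} A → ModuleCat.{0} A → Prop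
  | 0, M, X => Nonempty (X ≅ M)
  | n + 1, M, X => ∃ Y, IsSyzygyOf A M Y ∧ IsNthSyzygy n Y X

/-- `X ≅ Σ^n M`. -/
def IsNthCosyzygy : ℕ → ModuleCat.{0} A → ModuleCat.{0} A → Prop
  | 0, M, X => Nonempty (X ≅ M)
  | n + 1, M, X => ∃ Y, IsCosyzygyOf A M Y ∧ IsNthCosyzygy n Y X

/-- `X` is a direct summand of `Y`. -/
def IsDirectSummandOf (X Y : ModuleCat.{0} A) : Prop :=
  ∃ (i : X ⟶ Y) (r : Y ⟶ X), i ≫ r = 𝟙 X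

/-- `X ∈ add W` : `X` is a direct summand of a finite direct sum of copies of `W`. -/
def InAdd (X W : ModuleCat.{0} A) : Prop :=
  ∃ n : ℕ, IsDirectSummandOf A X (ModuleCat.of A (Fin n → ↥W))

/-- The delooping level of `M` is at most `d` :
`Ω^d M ∈ add (A ⊕ Ω^{d+1} M')` for some finitely generated `M'`. -/
def DelLE (d : ℕ) (M : ModuleCat.{0} A) : Prop :=
  ∃ X, IsNthSyzygy A d M X ∧
    ∃ M' : ModuleCat.{0} A, Module.Finite A ↥M' ∧
      ∃ X', IsNthSyzygy A (d + 1) M' X' ∧ InAdd A X (ModuleCat.of A (A × ↥X'))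

/-- The delooping level `del M ∈ ℕ∞`. -/
def delLevel (M : ModuleCat.{0} A) : ℕ∞ :=
  sInf {d : ℕ∞ | ∃ n : ℕ, d = n ∧ DelLE A n M}

/-- The delooping level of the algebra: the supremum of `del S` over the simple modules. -/
def delAlg : ℕ∞ :=
  sSup {d : ℕ∞ | ∃ S : ModuleCat.{0} A, IsSimpleModule A ↥S ∧ delLevel A S = d}

/-- `Q` is a minimal injective cogenerator: the injective envelope of the direct sum of
a complete set of representatives of the simple modules. -/
def IsMinimalInjectiveCogenerator (Q : ModuleCat.{0} A) : Prop :=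
  ∃ (ι : Type) (_ : Fintype ι) (S : ι → ModuleCat.{0} A),
    (∀ i, IsSimpleModule A ↥(S i)) ∧
    (∀ T : ModuleCat.{0} A, IsSimpleModule A ↥T → ∃! i, Nonempty (↥T ≃ₗ[A] ↥(S i))) ∧
    IsInjEnvOf A (ModuleCat.of A (∀ i, ↥(S i))) Q

/-- The desuspending level of `M` is at most `d` :
`Σ^d M ∈ add (D(A) ⊕ Σ^{d+1} M')` for some finitely generated `M'`. -/
def DesLE (d : ℕ) (M : ModuleCat.{0} A) : Prop :=
  ∃ X, IsNthCosyzygy A d M X ∧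
    ∃ Q, IsMinimalInjectiveCogenerator A Q ∧
      ∃ M' : ModuleCat.{0} A, Module.Finite A ↥M' ∧
        ∃ X', IsNthCosyzygy A (d + 1) M' X' ∧ InAdd A X (ModuleCat.of A (↥Q × ↥X'))

/-- The desuspending level `des M ∈ ℕ∞`. -/
def desLevel (M : ModuleCat.{0} A) : ℕ∞ :=
  sInf {d : ℕ∞ | ∃ n : ℕ, d = n ∧ DesLE A n M}

/-- The desuspending level of the algebra. -/
def desAlg : ℕ∞ :=
  sSup {d : ℕ∞ | ∃ S : ModuleCat.{0} A, IsSimpleModule A ↥S ∧ desLevel A S = d}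

/-- The (small) finitistic projective dimension `fin-pro A`. -/
def finProDim : ℕ∞ :=
  sSup {d : ℕ∞ | ∃ M : ModuleCat.{0} A, Module.Finite A ↥M ∧ projDim A M = d ∧ d ≠ ⊤}

/-- The (small) finitistic injective dimension `fin-inj A`. -/
def finInjDim : ℕ∞ :=
  sSup {d : ℕ∞ | ∃ M : ModuleCat.{0} A, Module.Finite A ↥M ∧ injDim A M = d ∧ d ≠ ⊤}

/-- The big finitistic projective dimension `Fin-pro A`. -/
def bigFinProDim : ℕ∞ :=
  sSup {d : ℕ∞ | ∃ M : ModuleCat.{0} A, projDim A M = d ∧ d ≠ ⊤}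

/-- The big finitistic injective dimension `Fin-inj A`. -/
def bigFinInjDim : ℕ∞ :=
  sSup {d : ℕ∞ | ∃ M : ModuleCat.{0} A, injDim A M = d ∧ d ≠ ⊤}

/-- `M` is an indecomposable nonzero module. -/
def Indec (M : ModuleCat.{0} A) : Prop :=
  Nontrivial ↥M ∧ ∀ (N₁ N₂ : Submodule A ↥M), IsCompl N₁ N₂ → N₁ = ⊥ ∨ N₂ = ⊥

/-- `M` is serial (uniserial): its submodules form a chain. -/
def IsUniserial (M : ModuleCat.{0} A) : Prop :=
  ∀ N₁ N₂ : Submodule A ↥M, N₁ ≤ N₂ ∨ N₂ ≤ N₁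

/-- `A` is a Nakayama algebra: all finitely generated indecomposable modules are serial. -/
def IsNakayama : Prop :=
  ∀ M : ModuleCat.{0} A, Module.Finite A ↥M → Indec A M → IsUniserial A M

/-- `A` is connected: it is not a nontrivial product of algebras. -/
def IsConnectedAlgebra : Prop :=
  Nontrivial A ∧ ∀ e : A, IsIdempotentElem e → e ∈ Set.center A → e = 0 ∨ e = 1

/-- `A` is a cyclic Nakayama algebra: connected Nakayama with no simple projective module. -/
def IsCyclicNakayama : Prop :=
  IsNakayama A ∧ IsConnectedAlgebra A ∧
    ¬ ∃ S : ModuleCat.{0} A, IsSimpleModule A ↥S ∧ Projective S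

/-- `T ≅ top M` (and `top M` is simple): there is an essential epimorphism `M ⟶ T`. -/
def IsSimpleTopOf (M T : ModuleCat.{0} A) : Prop :=
  IsSimpleModule A ↥T ∧
    ∃ f : M ⟶ T, Epi f ∧ ∀ (N : ModuleCat.{0} A) (g : N ⟶ M), Epi (g ≫ f) → Epi g

/-- `S ≅ soc M` (and `soc M` is simple): there is an essential monomorphism `S ⟶ M`. -/
def IsSimpleSocOf (M S : ModuleCat.{0} A) : Prop :=
  IsSimpleModule A ↥S ∧
    ∃ f : S ⟶ M, Mono f ∧ ∀ (N : ModuleCat.{0} A) (g : M ⟶ N), Mono (f ≫ g) → Mono g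

/-- `0 ⟶ N ⟶ E ⟶ M ⟶ 0` is an almost split (Auslander-Reiten) sequence. -/
def IsAlmostSplitSeq {N E M : ModuleCat.{0} A} (f : N ⟶ E) (g : E ⟶ M) : Prop :=
  Mono f ∧ Epi g ∧ (∃ w : f ≫ g = 0, (ShortComplex.mk f g w).Exact) ∧
  (¬ ∃ s : M ⟶ E, s ≫ g = 𝟙 M) ∧ Indec A N ∧ Indec A M ∧
  ∀ (X : ModuleCat.{0} A) (h : X ⟶ M), (¬ ∃ s : M ⟶ X, s ≫ h = 𝟙 M) → ∃ h' : X ⟶ E, h' ≫ g = h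

/-- `N ≅ τ M`, the Auslander-Reiten translate of `M` : there is an almost split sequence
`0 ⟶ N ⟶ E ⟶ M ⟶ 0`. -/
def IsTauOf (N M : ModuleCat.{0} A) : Prop :=
  ∃ (E : ModuleCat.{0} A) (f : N ⟶ E) (g : E ⟶ M), IsAlmostSplitSeq A f g

/-- `U ≅ ψ S = τ⁻ top (I S)`. -/
def IsPsiOf (S U : ModuleCat.{0} A) : Prop :=
  ∃ I, IsInjEnvOf A S I ∧ ∃ T, IsSimpleTopOf A I T ∧ IsTauOf A T U

/-- `T ≅ γ S = τ soc (P S)`. -/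
def IsGammaOf (S T : ModuleCat.{0} A) : Prop :=
  ∃ P, IsProjCoverOf A S P ∧ ∃ U, IsSimpleSocOf A P U ∧ IsTauOf A T U

/-- `T ≅ φ S = top (I S)`. -/
def IsPhiOf (S T : ModuleCat.{0} A) : Prop :=
  ∃ I, IsInjEnvOf A S I ∧ IsSimpleTopOf A I T

/-- There is a `ψ`-path `(S_1, …, S_m)` of cardinality `m` ending in `S`. -/
def PsiPathTo (m : ℕ) (S : ModuleCat.{0} A) : Prop :=
  1 ≤ m ∧ ∃ c : ℕ → ModuleCat.{0} A,
    (∀ i < m, IsSimpleModule A ↥(c i)) ∧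
    (∀ i, i + 1 < m → IsPsiOf A (c i) (c (i + 1))) ∧
    Nonempty (c (m - 1) ≅ S)

/-- `a(S)`: the supremum of the cardinalities of `ψ`-paths ending in `S`. -/
def aVal (S : ModuleCat.{0} A) : ℕ∞ :=
  sSup {d : ℕ∞ | ∃ m : ℕ, d = m ∧ PsiPathTo A m S}

/-- `a(A)`: the maximum of `a(S)` over the simple modules which are not `ψ`-cyclic. -/
def aAlg : ℕ∞ :=
  sSup {d : ℕ∞ | ∃ S : ModuleCat.{0} A, IsSimpleModule A ↥S ∧ aVal A S ≠ ⊤ ∧ aVal A S = d}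

/-- `S` is a composition factor of `M`: a simple subquotient of `M`. -/
def IsCompFactorOf (S M : ModuleCat.{0} A) : Prop :=
  IsSimpleModule A ↥S ∧ ∃ N' N : Submodule A ↥M, N' ≤ N ∧
    Nonempty ((↥N ⧸ N'.comap N.subtype) ≃ₗ[A] ↥S)

/-- `e(S) = min {pd S, pd (I S)} = x`. -/
def ERelVal (S : ModuleCat.{0} A) (x : ℕ∞) : Prop :=
  ∃ I, IsInjEnvOf A S I ∧ x = min (projDim A S) (projDim A I)

/-- `e*(S) = min {id S, id (P S)} = x`. -/
def EStarVal (S : ModuleCat.{0} A) (x : ℕ∞) : Prop :=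
  ∃ P, IsProjCoverOf A S P ∧ x = min (injDim A S) (injDim A P)

/-- `T = h(S) = top (Ω^{e(S)} N S)`, the homological permutation. -/
def HRel (S T : ModuleCat.{0} A) : Prop :=
  IsSimpleModule A ↥S ∧ IsSimpleModule A ↥T ∧
  ∃ z : ℕ, ERelVal A S z ∧
    ∃ N, ((Odd z ∧ N = S) ∨ (Even z ∧ IsInjEnvOf A S N)) ∧
      ∃ X, IsNthSyzygy A z N X ∧ IsSimpleTopOf A X T

/-- `S = h*(T) = soc (Σ^{e*(T)} N* T)`, the inverse homological permutation. -/
def HStarRel (T S : ModuleCat.{0} A) : Prop :=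
  IsSimpleModule A ↥T ∧ IsSimpleModule A ↥S ∧
  ∃ z : ℕ, EStarVal A T z ∧
    ∃ N, ((Odd z ∧ N = T) ∨ (Even z ∧ IsProjCoverOf A T N)) ∧
      ∃ X, IsNthCosyzygy A z N X ∧ IsSimpleSocOf A X S

/-- The `t`-fold relational iterate of a relation on modules (up to isomorphism). -/
def IterRel (r : ModuleCat.{0} A → ModuleCat.{0} A → Prop) :
    ℕ → ModuleCat.{0} A → ModuleCat.{0} A → Prop
  | 0, X, Y => Nonempty (X ≅ Y)
  | n + 1, X, Y => ∃ Z, r X Z ∧ IterRel r n Z Y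

end ArtinAlg


namespace ArtinAlg
open CategoryTheory.Abelian

section Part1
variable {A : Type} [Ring A]

lemma shortExact_kernel {X Y : ModuleCat.{0} A} (f : X ⟶ Y) [Epi f] :
    (ShortComplex.mk (kernel.ι f) f (kernel.condition f)).ShortExact where
  exact := ShortComplex.exact_kernel f

lemma shortExact_cokernel {X Y : ModuleCat.{0} A} (f : X ⟶ Y) [Mono f] :
    (ShortComplex.mk f (cokernel.π f) (cokernel.condition f)).ShortExact where
  exact := ShortComplex.exact_cokernel f

lemma projDimLE_iff (n : ℕ) (M : ModuleCat.{0} A) :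
    ProjDimLE A n M ↔ HasProjectiveDimensionLT M (n + 1) := by
  constructor
  · intro h
    induction h with
    | zero M h => infer_instance
    | succ n M P f hP hf h ih =>
      exact ((shortExact_kernel f).hasProjectiveDimensionLT_X₃_iff n hP).2 ih
  · intro h
    induction n generalizing M with
    | zero => exact .zero _ (projective_iff_hasProjectiveDimensionLT_one.2 h)
    | succ n ih =>
      exact .succ n M (Projective.over M) (Projective.π M) inferInstance inferInstance
        (ih _ (((shortExact_kernel (Projective.π M)).hasProjectiveDimensionLT_X₃_iff n
          inferInstance).1 h))

lemma injDimLE_iff (n : ℕ) (M : ModuleCat.{0} A) :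
    InjDimLE A n M ↔ HasInjectiveDimensionLT M (n + 1) := by
  constructor
  · intro h
    induction h with
    | zero M h => infer_instance
    | succ n M P f hP hf h ih =>
      exact ((shortExact_cokernel f).hasInjectiveDimensionLT_X₃_iff n hP).1 ih
  · intro h
    induction n generalizing M with
    | zero => exact .zero _ (injective_iff_hasInjectiveDimensionLT_one.2 h)
    | succ n ih =>
      exact .succ n M (Injective.under M) (Injective.ι M) inferInstance inferInstance
        (ih _ (((shortExact_cokernel (Injective.ι M)).hasInjectiveDimensionLT_X₃_iff n
          inferInstance).2 h))

lemma sInf_le_coe_iff (p : ℕ → Prop) (hp : ∀ m n, m ≤ n → p m → p n) (n : ℕ) :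
    sInf {d : ℕ∞ | ∃ n : ℕ, d = n ∧ p n} ≤ n ↔ p n := by
  constructor
  · intro h
    by_cases hne : {d : ℕ∞ | ∃ n : ℕ, d = n ∧ p n}.Nonempty
    · obtain ⟨m, hm, hpm⟩ := csInf_mem hne
      rw [hm] at h
      exact hp m n (by exact_mod_cast h) hpm
    · rw [Set.not_nonempty_iff_eq_empty.1 hne] at h
      simp at h
  · intro h
    exact sInf_le ⟨n, rfl, h⟩

lemma projDim_le_iff (n : ℕ) (M : ModuleCat.{0} A) :
    projDim A M ≤ n ↔ HasProjectiveDimensionLT M (n + 1) := by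
  unfold projDim
  rw [sInf_le_coe_iff, projDimLE_iff]
  intro m n hmn h
  rw [projDimLE_iff] at h ⊢
  exact hasProjectiveDimensionLT_of_ge M (m + 1) (n + 1) (by omega)

lemma injDim_le_iff (n : ℕ) (M : ModuleCat.{0} A) :
    injDim A M ≤ n ↔ HasInjectiveDimensionLT M (n + 1) := by
  unfold injDim
  rw [sInf_le_coe_iff, injDimLE_iff]
  intro m n hmn h
  rw [injDimLE_iff] at h ⊢
  exact hasInjectiveDimensionLT_of_ge M (m + 1) (n + 1) (by omega)

/-- Vanishing of `Ext^n(M, N)`. -/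
abbrev EZ (n : ℕ) (M N : ModuleCat.{0} A) : Prop := ∀ e : Ext M N n, e = 0

lemma EZ_of_proj {M N : ModuleCat.{0} A} (n k : ℕ) (h : HasProjectiveDimensionLT M n) (hk : n ≤ k) :
    EZ k M N := fun e => e.eq_zero_of_hasProjectiveDimensionLT n hk

lemma EZ_of_inj {M N : ModuleCat.{0} A} (n k : ℕ) (h : HasInjectiveDimensionLT N n) (hk : n ≤ k) :
    EZ k M N := fun e => e.eq_zero_of_hasInjectiveDimensionLT n hk


lemma EZ_contra₁ {S : ShortComplex (ModuleCat.{0} A)} (hS : S.ShortExact)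
    {N : ModuleCat.{0} A} {n : ℕ} (h2 : EZ n S.X₂ N) (h3 : EZ (n+1) S.X₃ N) :
    EZ n S.X₁ N := by
  intro e
  obtain ⟨x, rfl⟩ := Ext.contravariant_sequence_exact₁ hS N e (add_comm 1 n) (h3 _)
  rw [h2 x, Ext.comp_zero]

lemma EZ_contra₂ {S : ShortComplex (ModuleCat.{0} A)} (hS : S.ShortExact)
    {N : ModuleCat.{0} A} {n : ℕ} (h1 : EZ n S.X₁ N) (h3 : EZ n S.X₃ N) :
    EZ n S.X₂ N := by
  intro e
  obtain ⟨x, rfl⟩ := Ext.contravariant_sequence_exact₂ hS N e (h1 _)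
  rw [h3 x, Ext.comp_zero]

lemma EZ_contra₃ {S : ShortComplex (ModuleCat.{0} A)} (hS : S.ShortExact)
    {N : ModuleCat.{0} A} {n : ℕ} (h1 : EZ n S.X₁ N) (h2 : EZ (n+1) S.X₂ N) :
    EZ (n+1) S.X₃ N := by
  intro e
  obtain ⟨x, rfl⟩ := Ext.contravariant_sequence_exact₃ hS N e (h2 _) (add_comm 1 n)
  rw [h1 x, Ext.comp_zero]

lemma EZ_co₁ {S : ShortComplex (ModuleCat.{0} A)} (hS : S.ShortExact)
    {N : ModuleCat.{0} A} {n : ℕ} (h3 : EZ n N S.X₃) (h2 : EZ (n+1) N S.X₂) :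
    EZ (n+1) N S.X₁ := by
  intro e
  obtain ⟨x, rfl⟩ := Ext.covariant_sequence_exact₁ N hS e (h2 _) rfl
  rw [h3 x, Ext.zero_comp]

lemma EZ_co₂ {S : ShortComplex (ModuleCat.{0} A)} (hS : S.ShortExact)
    {N : ModuleCat.{0} A} {n : ℕ} (h1 : EZ n N S.X₁) (h3 : EZ n N S.X₃) :
    EZ n N S.X₂ := by
  intro e
  obtain ⟨x, rfl⟩ := Ext.covariant_sequence_exact₂ N hS e (h3 _)
  rw [h1 x, Ext.zero_comp]

lemma EZ_co₃ {S : ShortComplex (ModuleCat.{0} A)} (hS : S.ShortExact)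
    {N : ModuleCat.{0} A} {n : ℕ} (h2 : EZ n N S.X₂) (h1 : EZ (n+1) N S.X₁) :
    EZ n N S.X₃ := by
  intro e
  obtain ⟨x, rfl⟩ := Ext.covariant_sequence_exact₃ N hS e rfl (h1 _)
  rw [h2 x, Ext.zero_comp]

lemma EZ_congr_left {M M' N : ModuleCat.{0} A} {n : ℕ} (e : M ≅ M') (h : EZ n M N) : EZ n M' N := by
  intro x
  have : x = (Ext.mk₀ e.inv).comp ((Ext.mk₀ e.hom).comp x (zero_add n)) (zero_add n) := by simp
  rw [this, h ((Ext.mk₀ e.hom).comp x (zero_add n)), Ext.comp_zero]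

lemma EZ_congr_right {M N N' : ModuleCat.{0} A} {n : ℕ} (e : N ≅ N') (h : EZ n M N) : EZ n M N' := by
  intro x
  have : x = (x.comp (Ext.mk₀ e.inv) (add_zero n)).comp (Ext.mk₀ e.hom) (add_zero n) := by simp
  rw [this, h (x.comp (Ext.mk₀ e.inv) (add_zero n)), Ext.zero_comp]

/-- additivity in the first variable, via a decomposition of the identity -/
lemma EZ_retract_left {ι : Type} [Fintype ι] {X N : ModuleCat.{0} A} {n : ℕ}
    (W : ι → ModuleCat.{0} A)
    (a : ∀ i, X ⟶ W i) (b : ∀ i, W i ⟶ X) (h : ∑ i, a i ≫ b i = 𝟙 X)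
    (hW : ∀ i, EZ n (W i) N) : EZ n X N := by
  intro x
  have : x = (Ext.mk₀ (∑ i, a i ≫ b i)).comp x (zero_add n) := by rw [h]; simp
  rw [this, Ext.mk₀_sum, Ext.sum_comp]
  refine Finset.sum_eq_zero fun i _ => ?_
  rw [← Ext.mk₀_comp_mk₀, Ext.mk₀_comp_mk₀, ← Ext.mk₀_comp_mk₀_assoc, hW i (Ext.comp _ _ _), Ext.comp_zero]

lemma EZ_retract_right {ι : Type} [Fintype ι] {X N : ModuleCat.{0} A} {n : ℕ}
    (W : ι → ModuleCat.{0} A)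
    (a : ∀ i, X ⟶ W i) (b : ∀ i, W i ⟶ X) (h : ∑ i, a i ≫ b i = 𝟙 X)
    (hW : ∀ i, EZ n N (W i)) : EZ n N X := by
  intro x
  have : x = x.comp (Ext.mk₀ (∑ i, a i ≫ b i)) (add_zero n) := by rw [h]; simp
  rw [this, Ext.mk₀_sum, Ext.comp_sum]
  refine Finset.sum_eq_zero fun i _ => ?_
  rw [← Ext.mk₀_comp_mk₀, ← Ext.comp_assoc_of_third_deg_zero, hW i (Ext.comp _ _ _), Ext.zero_comp]

end Part1
end ArtinAlg

namespace ArtinAlg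
open CategoryTheory.Abelian

section Part2
variable {A : Type} [Ring A]

lemma shortExact_of_lin {X Y Z : Type} [AddCommGroup X] [AddCommGroup Y] [AddCommGroup Z]
    [Module A X] [Module A Y] [Module A Z] (f : X →ₗ[A] Y) (g : Y →ₗ[A] Z)
    (hf : Function.Injective f) (hg : Function.Surjective g) (h : Function.Exact f g) :
    (ShortComplex.mk (ModuleCat.ofHom f) (ModuleCat.ofHom g)
      (by ext x; exact h.apply_apply_eq_zero x)).ShortExact where
  exact := by
    rw [ShortComplex.ShortExact.moduleCat_exact_iff_function_exact]
    exact h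
  mono_f := (ModuleCat.mono_iff_injective _).2 hf
  epi_g := (ModuleCat.epi_iff_surjective _).2 hg

lemma shortExact_submodule {M : Type} [AddCommGroup M] [Module A M] (N : Submodule A M) :
    (ShortComplex.mk (ModuleCat.ofHom N.subtype) (ModuleCat.ofHom N.mkQ)
      (by ext x; exact (LinearMap.exact_subtype_mkQ N).apply_apply_eq_zero x)).ShortExact :=
  shortExact_of_lin _ _ N.injective_subtype N.mkQ_surjective (LinearMap.exact_subtype_mkQ N)

lemma EZ_of_subsingleton_left {M N : ModuleCat.{0} A} [Subsingleton M] (n : ℕ) : EZ n M N :=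
  EZ_of_proj 0 n ((ModuleCat.isZero_of_subsingleton M).hasProjectiveDimensionLT_zero) (Nat.zero_le _)

lemma EZ_finiteLength (n : ℕ) (N : ModuleCat.{0} A)
    (h : ∀ S : ModuleCat.{0} A, IsSimpleModule A S → EZ n S N)
    {M : Type} [AddCommGroup M] [Module A M] (hM : IsFiniteLength A M) :
    EZ n (ModuleCat.of A M) N := by
  induction hM with
  | of_subsingleton => exact EZ_of_subsingleton_left n
  | @of_simple_quotient M _ _ S hs _ ih =>
    exact EZ_contra₂ (shortExact_submodule S) ih (h (ModuleCat.of A (M ⧸ S)) hs)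

lemma injective_of_EZ_one (N : ModuleCat.{0} A)
    (h : ∀ I : Ideal A, EZ 1 (ModuleCat.of A (A ⧸ I)) N) : Injective N := by
  have hb : Module.Baer A N := by
    intro I g
    obtain ⟨x, hx⟩ := Ext.contravariant_sequence_exact₁ (shortExact_submodule (A := A) (M := A) I) N
      (Ext.mk₀ (ModuleCat.ofHom g)) (add_zero 1) (h I _)
    obtain ⟨x, rfl⟩ := (Ext.mk₀_bijective _ _).2 x
    rw [Ext.mk₀_comp_mk₀] at hx
    have hx' := (Ext.mk₀_bijective _ _).1 hx
    refine ⟨x.hom, fun y hy => ?_⟩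
    exact congrArg (fun f => f.hom ⟨y, hy⟩) hx'
  have := hb.injective
  exact Module.injective_object_of_injective_module A N

/-- Injective dimension is tested on simples. -/
lemma injDim_of_simples [IsArtinianRing A] (n : ℕ) (N : ModuleCat.{0} A)
    (h : ∀ S : ModuleCat.{0} A, IsSimpleModule A S → EZ (n + 1) S N) :
    HasInjectiveDimensionLT N (n + 1) := by
  induction n generalizing N with
  | zero =>
    rw [zero_add, ← injective_iff_hasInjectiveDimensionLT_one]
    refine injective_of_EZ_one N fun I => EZ_finiteLength 1 N h ?_
    exact isFiniteLength_iff_isNoetherian_isArtinian.2 ⟨inferInstance, inferInstance⟩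
  | succ n ih =>
    have hse := shortExact_cokernel (Injective.ι N)
    refine (hse.hasInjectiveDimensionLT_X₃_iff n inferInstance).1 (ih _ fun S hS => ?_)
    exact EZ_co₃ hse (EZ_of_inj 1 _ inferInstance (by omega)) (h S hS)

lemma extend_semisimple [IsArtinianRing A] {K P : ModuleCat.{0} A} (f : K ⟶ P)
    (h : ∀ S : ModuleCat.{0} A, IsSimpleModule A S → ∀ g : K ⟶ S, ∃ g' : P ⟶ S, f ≫ g' = g)
    (Y : Type) [AddCommGroup Y] [Module A Y] [IsSemisimpleModule A Y]
    (g : K →ₗ[A] Y) : ∃ g' : P →ₗ[A] Y, g' ∘ₗ f.hom = g := by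
  -- embed Y in a product of simples
  let J := {N : Submodule A Y // IsSimpleModule A (Y ⧸ N)}
  let emb : Y →ₗ[A] (∀ j : J, Y ⧸ j.1) := LinearMap.pi fun j => j.1.mkQ
  have hemb : Function.Injective emb := by
    rw [← LinearMap.ker_eq_bot, eq_bot_iff]
    have := IsSemisimpleModule.jacobson_eq_bot A Y
    rw [← this]
    intro y hy
    simp only [Module.jacobson, Submodule.mem_sInf]
    intro N hN
    have hN' : IsSimpleModule A (Y ⧸ N) := isSimpleModule_iff_isCoatom.2 hN
    have : emb y ⟨N, hN'⟩ = 0 := by rw [LinearMap.mem_ker.1 hy]; rfl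
    exact (Submodule.Quotient.mk_eq_zero N).1 this
  -- the product is semisimple
  have hss : IsSemisimpleModule A (∀ j : J, Y ⧸ j.1) := by
    have htor : Module.IsTorsionBySet A (∀ j : J, Y ⧸ j.1) (Ring.jacobson A) := by
      intro x a
      funext j
      have := j.2
      have := IsSemisimpleModule.jacobson_le_annihilator A (Y ⧸ j.1)
      exact Module.mem_annihilator.1 (this a.2) (x j)
    let _ := htor.module
    have := IsSemiprimaryRing.isSemisimpleRing (R := A)
    exact (htor.semilinearMap.isSemisimpleModule_iff_of_bijective Function.bijective_id).2
      inferInstance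
  obtain ⟨r, hr⟩ := IsSemisimpleModule.extension_property emb hemb LinearMap.id
  have hj : ∀ j : J, ∃ g' : P ⟶ ModuleCat.of A (Y ⧸ j.1),
      f ≫ g' = ModuleCat.ofHom (j.1.mkQ ∘ₗ g) := fun j => h (ModuleCat.of A (Y ⧸ j.1)) j.2 _
  choose g' hg' using hj
  refine ⟨r ∘ₗ LinearMap.pi fun j => (g' j).hom, ?_⟩
  ext k
  have : (LinearMap.pi fun j => (g' j).hom) (f.hom k) = emb (g k) := by
    funext j
    exact congrArg (fun f => f.hom k) (hg' j)
  simp only [LinearMap.comp_apply, this]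
  exact congrArg (fun f => f (g k)) hr

lemma EZ_one_of_extend {S : ShortComplex (ModuleCat.{0} A)} (hS : S.ShortExact)
    (hP : Projective S.X₂) (X : ModuleCat.{0} A)
    (h : ∀ g : S.X₁ ⟶ X, ∃ g' : S.X₂ ⟶ X, S.f ≫ g' = g) : EZ 1 S.X₃ X := by
  intro e
  obtain ⟨x, rfl⟩ := Ext.contravariant_sequence_exact₃ hS X e
    (EZ_of_proj 1 1 inferInstance le_rfl _) (add_zero 1)
  obtain ⟨x, rfl⟩ := (Ext.mk₀_bijective _ _).2 x
  obtain ⟨g', rfl⟩ := h x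
  rw [← Ext.mk₀_comp_mk₀, hS.extClass_comp_assoc]

lemma extend_of_EZ_one {S : ShortComplex (ModuleCat.{0} A)} (hS : S.ShortExact)
    (X : ModuleCat.{0} A) (h : EZ 1 S.X₃ X) (g : S.X₁ ⟶ X) : ∃ g' : S.X₂ ⟶ X, S.f ≫ g' = g := by
  obtain ⟨x, hx⟩ := Ext.contravariant_sequence_exact₁ hS X (Ext.mk₀ g) (add_zero 1) (h _)
  obtain ⟨x, rfl⟩ := (Ext.mk₀_bijective _ _).2 x
  rw [Ext.mk₀_comp_mk₀] at hx
  exact ⟨x, (Ext.mk₀_bijective _ _).1 hx⟩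

lemma projective_of_simples [IsArtinianRing A] (M : ModuleCat.{0} A)
    (h : ∀ S : ModuleCat.{0} A, IsSimpleModule A S → EZ 1 M S) : Projective M := by
  rw [projective_iff_subsingleton_ext_one]
  have hse := shortExact_kernel (Projective.π M)
  have key : ∀ X : Type, ∀ [AddCommGroup X] [Module A X], EZ 1 M (ModuleCat.of A X) := by
    intro X _ _
    refine IsSemiprimaryRing.induction (R₀ := ℤ) (R := A) (M := X)
      (P := fun X _ _ _ => EZ 1 M (ModuleCat.of A X)) ?_ ?_
    · intro Y _ _ _ _ _ _
      refine EZ_one_of_extend hse inferInstance _ fun g => ?_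
      obtain ⟨g', hg'⟩ := extend_semisimple (kernel.ι (Projective.π M))
        (fun S hS g => extend_of_EZ_one hse S (h S hS) g) Y g.hom
      exact ⟨ModuleCat.ofHom g', ModuleCat.hom_ext hg'⟩
    · intro Y _ _ _ _ N h1 h2
      exact EZ_co₂ (shortExact_submodule N) h1 h2
  intro Y
  exact ⟨fun a b => by rw [key Y a, key Y b]⟩

/-- Projective dimension is tested on simples. -/
lemma projDim_of_simples [IsArtinianRing A] (n : ℕ) (M : ModuleCat.{0} A)
    (h : ∀ S : ModuleCat.{0} A, IsSimpleModule A S → EZ (n + 1) M S) :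
    HasProjectiveDimensionLT M (n + 1) := by
  induction n generalizing M with
  | zero =>
    rw [zero_add, ← projective_iff_hasProjectiveDimensionLT_one]
    exact projective_of_simples M h
  | succ n ih =>
    have hse := shortExact_kernel (Projective.π M)
    refine (hse.hasProjectiveDimensionLT_X₃_iff n inferInstance).2 (ih _ fun S hS => ?_)
    exact EZ_contra₁ hse (EZ_of_proj 1 _ inferInstance (by omega)) (h S hS)

end Part2
end ArtinAlg

namespace ArtinAlg

section Part3
universe v u
variable {C : Type u} [Category.{v} C] [Abelian C]
open scoped ZeroObject

/-- The data needed for the syzygy argument: a class `F` of objects (finitely generated ones) and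
a dimension predicate `D`. -/
structure SyzSetup (F : C → Prop) (D : ℕ → C → Prop) : Prop where
  enough : ∀ X, F X → ∃ (P : C) (f : P ⟶ X), F P ∧ Projective P ∧ Epi f
  ext : ∀ S : ShortComplex C, S.ShortExact → F S.X₁ → F S.X₃ → F S.X₂
  sub : ∀ S : ShortComplex C, S.ShortExact → F S.X₂ → F S.X₁
  D0 : ∀ M, D 0 M → Projective M
  Dsucc : ∀ (d : ℕ) (S : ShortComplex C), S.ShortExact → Projective S.X₂ → D (d + 1) S.X₃ → D d S.X₁
  Dext : ∀ (d : ℕ) (S : ShortComplex C), S.ShortExact → D d S.X₁ → Projective S.X₃ → D d S.X₂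

/-- `X` is a syzygy of `M` (not necessarily minimal). -/
def Syz (F : C → Prop) (M X : C) : Prop :=
  ∃ (P : C) (i : X ⟶ P) (p : P ⟶ M) (w : i ≫ p = 0),
    (ShortComplex.mk i p w).ShortExact ∧ F P ∧ Projective P

/-- `X` is an `n`-th syzygy of `M` (not necessarily minimal). -/
def NSyz (F : C → Prop) : ℕ → C → C → Prop
  | 0, M, X => Nonempty (X ≅ M)
  | n + 1, M, X => ∃ Y, Syz F M Y ∧ NSyz F n Y X

/-- `X` is a direct summand of `Y ⊕ P`, with `P` projective in `F`. -/
def StLE (F : C → Prop) (X Y : C) : Prop :=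
  ∃ (P : C) (a : X ⟶ Y) (b : Y ⟶ X) (s : X ⟶ P) (t : P ⟶ X),
    F P ∧ Projective P ∧ a ≫ b + s ≫ t = 𝟙 X

variable {F : C → Prop} {D : ℕ → C → Prop}

lemma StLE.trans (h : SyzSetup F D) {X Y Z : C} (h1 : StLE F X Y) (h2 : StLE F Y Z) :
    StLE F X Z := by
  obtain ⟨P, a, b, s, t, hF, hP, e⟩ := h1
  obtain ⟨P', a', b', s', t', hF', hP', e'⟩ := h2
  refine ⟨P ⊞ P', a ≫ a', b' ≫ b, biprod.lift s (a ≫ s'), biprod.desc t (t' ≫ b), ?_,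
    inferInstance, ?_⟩
  · exact h.ext _ (ShortComplex.Splitting.ofHasBinaryBiproduct P P').shortExact hF hF'
  · have : a ≫ b = a ≫ (a' ≫ b' + s' ≫ t') ≫ b := by rw [e', Category.id_comp]
    rw [biprod.lift_desc, ← e, this]
    simp only [Preadditive.comp_add, Preadditive.add_comp, Category.assoc]
    abel

lemma StLE.of_iso (h : SyzSetup F D) {X Y : C} (e : X ≅ Y) (hX : F X) : StLE F X Y := by
  obtain ⟨P, f, hF, hP, _⟩ := h.enough X hX
  exact ⟨P, e.hom, e.inv, 0, 0, hF, hP, by simp⟩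

/-- Taking syzygies is monotone. -/
lemma StLE.syz {X Y X' Y' : C} (h1 : StLE F X Y) (hX : Syz F X X')
    (hY : Syz F Y Y') : StLE F X' Y' := by
  obtain ⟨P, a, b, s, t, hF, hP, e⟩ := h1
  obtain ⟨PX, iX, pX, wX, hsX, hFX, hPX⟩ := hX
  obtain ⟨PY, iY, pY, wY, hsY, hFY, hPY⟩ := hY
  have := hsX.mono_f
  have := hsY.mono_f
  have := hsX.epi_g
  have := hsY.epi_g
  dsimp at *
  let a' := Projective.factorThru (pX ≫ a) pY
  have ha' : a' ≫ pY = pX ≫ a := Projective.factorThru_comp _ _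
  let b' := Projective.factorThru (pY ≫ b) pX
  have hb' : b' ≫ pX = pY ≫ b := Projective.factorThru_comp _ _
  let t' := Projective.factorThru t pX
  have ht' : t' ≫ pX = t := Projective.factorThru_comp _ _
  let ka := hsY.exact.lift (iX ≫ a') (by dsimp; rw [Category.assoc, ha', reassoc_of% wX, zero_comp])
  have hka : ka ≫ iY = iX ≫ a' := hsY.exact.lift_f _ _
  let kb := hsX.exact.lift (iY ≫ b') (by dsimp; rw [Category.assoc, hb', reassoc_of% wY, zero_comp])
  have hkb : kb ≫ iX = iY ≫ b' := hsX.exact.lift_f _ _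
  let u := hsX.exact.lift (𝟙 PX - (a' ≫ b' + pX ≫ s ≫ t')) (by
    dsimp
    have : pX ≫ (a ≫ b + s ≫ t) = pX := by rw [e, Category.comp_id]
    simp only [Preadditive.sub_comp, Preadditive.add_comp, Category.assoc, hb', reassoc_of% ha', ht',
      Category.id_comp]
    rw [← Preadditive.comp_add, this, sub_self])
  have hu : u ≫ iX = 𝟙 PX - (a' ≫ b' + pX ≫ s ≫ t') := hsX.exact.lift_f _ _
  refine ⟨PX, ka, kb, iX, u, hFX, hPX, ?_⟩
  rw [← cancel_mono iX]
  simp only [Preadditive.add_comp, Category.assoc, hkb, reassoc_of% hka, hu, Preadditive.comp_sub,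
    Preadditive.comp_add, reassoc_of% wX, zero_comp, Category.comp_id, Category.id_comp]
  abel

lemma Syz.mem (h : SyzSetup F D) {M X : C} (hX : Syz F M X) : F X := by
  obtain ⟨P, i, p, w, hs, hF, _⟩ := hX
  exact h.sub _ hs hF

lemma exists_syz (h : SyzSetup F D) {M : C} (hM : F M) : ∃ X, Syz F M X := by
  obtain ⟨P, f, hF, hP, hf⟩ := h.enough M hM
  exact ⟨kernel f, P, kernel.ι f, f, kernel.condition f, ⟨ShortComplex.exact_kernel f⟩, hF, hP⟩

lemma exists_nsyz (h : SyzSetup F D) (n : ℕ) {M : C} (hM : F M) : ∃ X, NSyz F n M X := by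
  induction n generalizing M with
  | zero => exact ⟨M, ⟨Iso.refl M⟩⟩
  | succ n ih =>
    obtain ⟨Y, hY⟩ := exists_syz h hM
    obtain ⟨X, hX⟩ := ih (hY.mem h)
    exact ⟨X, Y, hY, hX⟩

lemma F_of_iso (h : SyzSetup F D) {X Y : C} (e : X ≅ Y) (hX : F X) : F Y := by
  refine h.sub (ShortComplex.mk e.inv (0 : X ⟶ 0) (by simp)) ?_ hX
  exact { exact := (ShortComplex.exact_iff_epi _ rfl).2 (by dsimp; infer_instance)
          mono_f := by dsimp; infer_instance
          epi_g := by dsimp; infer_instance }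

lemma StLE.nsyz (h : SyzSetup F D) (n : ℕ) {X Y X' Y' : C} (hX0 : F X) (hY0 : F Y)
    (h1 : StLE F X Y) (hX : NSyz F n X X') (hY : NSyz F n Y Y') : StLE F X' Y' := by
  induction n generalizing X Y with
  | zero =>
    obtain ⟨e⟩ := hX
    obtain ⟨e'⟩ := hY
    exact ((StLE.of_iso h e (F_of_iso h e.symm hX0)).trans h h1).trans h
      (StLE.of_iso h e'.symm hY0)
  | succ n ih =>
    obtain ⟨X1, hX1, hX⟩ := hX
    obtain ⟨Y1, hY1, hY⟩ := hY
    exact ih (hX1.mem h) (hY1.mem h) (h1.syz hX1 hY1) hX hY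

lemma StLE.refl (h : SyzSetup F D) {X : C} (hX : F X) : StLE F X X :=
  StLE.of_iso h (Iso.refl X) hX

/-- Pulling back a short exact sequence. -/
lemma shortExact_pullback {K X Z Y W : C} {i : K ⟶ X} {f : X ⟶ Z} {w : i ≫ f = 0}
    (hs : (ShortComplex.mk i f w).ShortExact) {g : Y ⟶ Z} {p1 : W ⟶ X} {p2 : W ⟶ Y}
    (hW : IsPullback p1 p2 f g) :
    ∃ (j : K ⟶ W) (w' : j ≫ p2 = 0), (ShortComplex.mk j p2 w').ShortExact := by
  have hm : Mono i := hs.mono_f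
  have he : Epi f := hs.epi_g
  have hj1 : hW.lift i 0 (by rw [w, zero_comp]) ≫ p1 = i := hW.lift_fst _ _ _
  have hj2 : hW.lift i 0 (by rw [w, zero_comp]) ≫ p2 = 0 := hW.lift_snd _ _ _
  have hmono : Mono (hW.lift i 0 (by rw [w, zero_comp])) := by
    have h3 : Mono (hW.lift i 0 (by rw [w, zero_comp]) ≫ p1) := by
      rw [hj1]; exact hm
    exact mono_of_mono _ p1
  refine ⟨_, hj2, { exact := ?_, mono_f := hmono, epi_g := ?_ }⟩
  · have : Mono (ShortComplex.mk _ _ hj2).f := hmono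
    refine ShortComplex.exact_of_f_is_kernel _ (KernelFork.IsLimit.ofι' _ _ fun {T} k hk => ?_)
    dsimp at k hk
    have hk' : (k ≫ p1) ≫ f = 0 := by
      rw [Category.assoc, hW.w, reassoc_of% hk, zero_comp]
    refine ⟨hs.exact.lift (k ≫ p1) hk', ?_⟩
    have hl := hs.exact.lift_f (k ≫ p1) hk'
    apply hW.hom_ext
    · dsimp at hl ⊢
      rw [Category.assoc, hj1, hl]
    · dsimp at hl ⊢
      rw [Category.assoc, hj2, comp_zero, hk]
  · have h4 : hW.isoPullback.hom ≫ pullback.snd f g = p2 := hW.isoPullback_hom_snd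
    dsimp
    rw [← h4]
    infer_instance

/-- The preimage of a subobject under an epimorphism. -/
lemma shortExact_preimage {S M Q P : C} {i : S ⟶ M} {q : M ⟶ Q} {w : i ≫ q = 0}
    (hs : (ShortComplex.mk i q w).ShortExact) (p : P ⟶ M) [Epi p] :
    (ShortComplex.mk (pullback.fst p i) (p ≫ q)
      (by rw [reassoc_of% pullback.condition, w, comp_zero])).ShortExact := by
  have := hs.mono_f
  have := hs.epi_g
  dsimp at *
  refine { exact := ?_, mono_f := ?_, epi_g := ?_ }
  · refine ShortComplex.exact_of_f_is_kernel _ (KernelFork.IsLimit.ofι' _ _ fun {T} k hk => ?_)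
    dsimp at k hk
    have hk' : (k ≫ p) ≫ q = 0 := by rw [Category.assoc, hk]
    exact ⟨pullback.lift k (hs.exact.lift (k ≫ p) hk') (hs.exact.lift_f (k ≫ p) hk').symm,
      pullback.lift_fst _ _ _⟩
  · dsimp; infer_instance
  · dsimp; infer_instance

/-- The main lemma. -/
lemma main_syz (h : SyzSetup F D) (d : ℕ) {S M Q X X' : C} {i : S ⟶ M} {q : M ⟶ Q} {w : i ≫ q = 0}
    (hs : (ShortComplex.mk i q w).ShortExact) (hM : F M) (hQ : F Q)
    (hD : D d M) (hX : NSyz F d S X) (hX' : NSyz F (d + 1) Q X') : StLE F X X' := by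
  induction d generalizing S M Q X X' with
  | zero =>
    have hS : F S := h.sub _ hs hM
    have hsy : Syz F Q S := ⟨M, i, q, w, hs, hM, h.D0 M hD⟩
    obtain ⟨Y, hY, ⟨e'⟩⟩ := hX'
    obtain ⟨e⟩ := hX
    exact ((StLE.of_iso h e (F_of_iso h e.symm hS)).trans h
      ((StLE.refl h hQ).syz hsy hY)).trans h (StLE.of_iso h e'.symm (hY.mem h))
  | succ d ih =>
    have hS : F S := h.sub _ hs hM
    obtain ⟨P, p, hFP, hPP, hp⟩ := h.enough M hM
    have hker : (ShortComplex.mk (kernel.ι p) p (kernel.condition p)).ShortExact :=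
      ⟨ShortComplex.exact_kernel p⟩
    -- `L` is a syzygy of `Q`
    have hL := shortExact_preimage hs p
    have hSyzL : Syz F Q (pullback p i) := ⟨P, _, _, _, hL, hFP, hPP⟩
    have hFL : F (pullback p i) := hSyzL.mem h
    obtain ⟨j1, wj1, hLS⟩ := shortExact_pullback hker (IsPullback.of_hasPullback p i)
    obtain ⟨S1, ⟨PS, iS, pS, wS, hsS, hFS, hPS⟩, hX⟩ := hX
    -- `N` maps to `PS` and `L`
    have hpb := IsPullback.of_hasPullback (pullback.snd p i) pS
    obtain ⟨j2, wj2, hN1⟩ := shortExact_pullback hLS hpb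
    obtain ⟨j3, wj3, hN2⟩ := shortExact_pullback hsS hpb.flip
    have hDK : D d (kernel p) := h.Dsucc d _ hker hPP hD
    have hFS1 : F S1 := h.sub _ hsS hFS
    have hDN : D d (pullback (pullback.snd p i) pS) :=
      h.Dext d _ hN1 hDK hPS
    have hFN : F (pullback (pullback.snd p i) pS) :=
      h.ext _ hN2 hFS1 hFL
    obtain ⟨X'', hX''⟩ := exists_nsyz h (d + 1) hFL
    obtain ⟨Y, hY, hX'⟩ := hX'
    have h1 := ih hN2 hFN hFL hDN hX hX''
    have h2 : StLE F (pullback p i) Y := (StLE.refl h hQ).syz hSyzL hY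
    exact h1.trans h (h2.nsyz h (d + 1) hFL (hY.mem h) hX'' hX')

end Part3
end ArtinAlg
namespace ArtinAlg

section Part4
variable {A : Type} [Ring A]

/-- Finitely generated modules over an artinian ring have projective covers. -/
lemma exists_projCover [IsArtinianRing A] (M : ModuleCat.{0} A) [Module.Finite A M] :
    ∃ (P : ModuleCat.{0} A) (f : P ⟶ M), Module.Finite A P ∧ IsProjectiveCoverHom A f := by
  obtain ⟨k, f0, hf0⟩ := Module.Finite.exists_fin' A M
  let 𝒮 : Set (Submodule A (Fin k → A)) := {P | Module.Projective A P ∧ P.map f0 = ⊤}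
  have htop : (⊤ : Submodule A (Fin k → A)) ∈ 𝒮 := by
    refine ⟨Module.Projective.of_equiv (Submodule.topEquiv (R := A) (M := Fin k → A)).symm, ?_⟩
    rw [Submodule.map_top, LinearMap.range_eq_top.2 hf0]
  obtain ⟨P, ⟨hP, hPf⟩, hmin⟩ := (wellFounded_lt (α := Submodule A (Fin k → A))).has_min 𝒮 ⟨_, htop⟩
  let g : P →ₗ[A] M := f0 ∘ₗ P.subtype
  have hg : LinearMap.range g = ⊤ := by
    rw [LinearMap.range_comp, Submodule.range_subtype, hPf]
  have key : ∀ N : Submodule A P, N.map g = ⊤ → N = ⊤ := by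
    intro N hN
    have hsurj : Function.Surjective (g ∘ₗ N.subtype) := by
      rw [← LinearMap.range_eq_top, LinearMap.range_comp, Submodule.range_subtype, hN]
    obtain ⟨h0, hh0⟩ := Module.projective_lifting_property (g ∘ₗ N.subtype) g hsurj
    let h : Module.End A P := N.subtype ∘ₗ h0
    have hgh : g ∘ₗ h = g := hh0
    have hpow : ∀ n, g ∘ₗ (h ^ n : Module.End A P) = g := by
      intro n
      induction n with
      | zero => rfl
      | succ n ih =>
        rw [pow_succ, Module.End.mul_eq_comp, ← LinearMap.comp_assoc, ih, hgh]
    obtain ⟨n, hn⟩ := Filter.eventually_atTop.1 (LinearMap.eventually_isCompl_ker_pow_range_pow h)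
    have hc := hn (n + 1) (Nat.le_succ n)
    have hproj : Module.Projective A (LinearMap.range (h ^ (n + 1))) := by
      refine Module.Projective.of_split (LinearMap.range (h ^ (n + 1))).subtype
        (Submodule.projectionOnto _ _ hc.symm) (LinearMap.ext fun x => ?_)
      exact Submodule.projectionOnto_apply_left hc.symm x
    have hmem : (LinearMap.range (h ^ (n + 1))).map P.subtype ∈ 𝒮 := by
      refine ⟨Module.Projective.of_equiv
        (Submodule.equivMapOfInjective P.subtype P.injective_subtype _), ?_⟩
      rw [← Submodule.map_comp, ← LinearMap.range_comp]
      change LinearMap.range (g ∘ₗ (h ^ (n + 1) : Module.End A P)) = ⊤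
      rw [hpow, hg]
    have hle : (LinearMap.range (h ^ (n + 1))).map P.subtype ≤ P := Submodule.map_subtype_le _ _
    have heq : (LinearMap.range (h ^ (n + 1))).map P.subtype = P :=
      eq_of_le_of_not_lt hle (hmin _ hmem)
    have hr : LinearMap.range (h ^ (n + 1)) = ⊤ := by
      apply Submodule.map_injective_of_injective P.injective_subtype
      rw [heq, Submodule.map_top, Submodule.range_subtype]
    rw [eq_top_iff, ← hr]
    rintro _ ⟨x, rfl⟩
    rw [pow_succ', Module.End.mul_apply]
    exact (h0 _).2
  refine ⟨ModuleCat.of A P, ModuleCat.ofHom g, inferInstanceAs (Module.Finite A P), ?_, ?_, ?_⟩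
  · infer_instance
  · rw [ModuleCat.epi_iff_range_eq_top]; exact hg
  · intro N u hu
    rw [ModuleCat.epi_iff_range_eq_top] at hu ⊢
    apply key
    rw [← LinearMap.range_comp]
    exact hu

/-- Essential extensions of submodules. -/
def Ess {I : Type} [AddCommGroup I] [Module A I] (M E : Submodule A I) : Prop :=
  M ≤ E ∧ ∀ x ∈ E, Disjoint (Submodule.span A {x}) M → x = 0

lemma exists_max_ess {I : Type} [AddCommGroup I] [Module A I] (M : Submodule A I) :
    ∃ E, Maximal (Ess M) E := by
  have hM : Ess M M := by
    refine ⟨le_rfl, fun x hx h => ?_⟩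
    have : Submodule.span A {x} ≤ M := by simpa using hx
    have := h.eq_bot_of_le this
    simpa using this
  obtain ⟨E, -, hE⟩ := zorn_le_nonempty₀ {E | Ess M E} (fun c hc hch y hy => by
    refine ⟨sSup c, ⟨(hc hy).1.trans (le_sSup hy), fun x hx h => ?_⟩, fun z hz => le_sSup hz⟩
    obtain ⟨z, hz, hxz⟩ := (Submodule.mem_sSup_of_directed ⟨y, hy⟩ hch.directedOn).1 hx
    exact (hc hz).2 x hxz h) M hM
  exact ⟨E, hE⟩

lemma exists_max_disj {I : Type} [AddCommGroup I] [Module A I] (E : Submodule A I) :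
    ∃ C, Maximal (fun C => Disjoint C E) C := by
  obtain ⟨C, -, hC⟩ := zorn_le_nonempty₀ {C : Submodule A I | Disjoint C E} (fun c hc hch y hy => by
    refine ⟨sSup c, ?_, fun z hz => le_sSup hz⟩
    rw [Set.mem_ofPred_eq, Submodule.disjoint_def]
    intro x hx hxE
    obtain ⟨z, hz, hxz⟩ := (Submodule.mem_sSup_of_directed ⟨y, hy⟩ hch.directedOn).1 hx
    exact Submodule.disjoint_def.1 (hc hz) x hxz hxE) ⊥ disjoint_bot_left
  exact ⟨C, hC⟩

/-- A maximal essential extension inside an injective module is a retract. -/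
lemma retract_of_max_ess {I : Type} [AddCommGroup I] [Module A I] [hI : Module.Injective A I]
    (M E : Submodule A I) (hE : Maximal (Ess M) E) : ∃ π : I →ₗ[A] E, ∀ x : E, π x = x := by
  obtain ⟨C, hC⟩ := exists_max_disj E
  let ι : E →ₗ[A] (I ⧸ C) := C.mkQ ∘ₗ E.subtype
  have hι : Function.Injective ι := by
    rw [← LinearMap.ker_eq_bot, LinearMap.ker_eq_bot']
    intro x hx
    have : (x : I) ∈ C := by simpa [ι] using hx
    exact Subtype.ext (Submodule.disjoint_def.1 hC.1 x this x.2)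
  obtain ⟨h, hh⟩ := Module.Injective.extension_property A I E (I ⧸ C) ι hι E.subtype
  have hh' : ∀ x : E, h (C.mkQ x) = x := fun x => LinearMap.congr_fun hh x
  -- `h` is injective
  have hinj : LinearMap.ker h = ⊥ := by
    have h1 : C ≤ (LinearMap.ker h).comap C.mkQ := fun x hx => by
      have : C.mkQ x = 0 := by simpa using hx
      simp [this]
    have h2 : Disjoint ((LinearMap.ker h).comap C.mkQ) E := by
      rw [Submodule.disjoint_def]
      intro x hx hxE
      have := hh' ⟨x, hxE⟩
      exact this.symm.trans hx
    have h3 := hC.2 h2 h1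
    rw [eq_bot_iff]
    intro y hy
    obtain ⟨x, rfl⟩ := C.mkQ_surjective y
    have : x ∈ C := h3 hy
    simpa using this
  have hEr : E ≤ LinearMap.range h := fun x hx => ⟨_, hh' ⟨x, hx⟩⟩
  have hess : Ess M (LinearMap.range h) := by
    refine ⟨hE.1.1.trans hEr, ?_⟩
    rintro _ ⟨y, rfl⟩ hd
    -- first, `span (h y)` is disjoint from `E`
    have hdE : Disjoint (Submodule.span A {h y}) E := by
      rw [Submodule.disjoint_def]
      intro z hz hzE
      refine hE.1.2 z hzE (hd.mono_left ?_)
      simpa using hz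
    obtain ⟨x, rfl⟩ := C.mkQ_surjective y
    have hdC : Disjoint (C ⊔ Submodule.span A {x}) E := by
      rw [Submodule.disjoint_def]
      intro z hz hzE
      obtain ⟨c, hc, w, hw, rfl⟩ := Submodule.mem_sup.1 hz
      obtain ⟨a, rfl⟩ := Submodule.mem_span_singleton.1 hw
      have e1 := hh' ⟨_, hzE⟩
      have hc0 : C.mkQ c = 0 := by simpa using hc
      have e2 : h (C.mkQ (c + a • x)) = a • h (C.mkQ x) := by
        rw [map_add, hc0, zero_add, map_smul, map_smul]
      rw [e2] at e1
      simp only at e1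
      refine Submodule.disjoint_def.1 hdE _ ?_ hzE
      rw [← e1]
      exact Submodule.smul_mem _ _ (Submodule.mem_span_singleton_self _)
    have hx : x ∈ C := hC.2 hdC le_sup_left
      (Submodule.mem_sup_right (Submodule.mem_span_singleton_self _))
    have : C.mkQ x = 0 := by simpa using hx
    rw [this, map_zero]
  have hle : LinearMap.range h ≤ E := hE.2 hess hEr
  refine ⟨(h ∘ₗ C.mkQ).codRestrict E fun x => hle ⟨_, rfl⟩, fun x => Subtype.ext (hh' x)⟩

lemma finite_of_ess (R : Type) [CommRing R] [IsArtinianRing R] [Algebra R A] [Module.Finite R A]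
    {I : Type} [AddCommGroup I] [Module A I] (M E : Submodule A I) [hM : Module.Finite A M]
    (hE : Ess M E) : Module.Finite A E := by
  let _ : Module R I := Module.compHom I (algebraMap R A)
  have : IsScalarTower R A I := ⟨fun r a x => by
    change (r • a) • x = algebraMap R A r • a • x
    rw [Algebra.smul_def, mul_smul]⟩
  have : IsArtinianRing A := IsArtinianRing.of_finite R A
  have : Module.Finite R M := Module.Finite.trans A M
  have : IsNoetherian R M := inferInstance
  have key : ∀ {Z : Type} [AddCommGroup Z] [Module A Z], IsFiniteLength A Z →
      IsNoetherian R (Z →ₗ[A] E) := by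
    intro Z _ _ hZ
    induction hZ with
    | of_subsingleton =>
      infer_instance
    | @of_simple_quotient Z _ _ N hs _ ih =>
      have hsimple : IsNoetherian R ((Z ⧸ N) →ₗ[A] E) := by
        have := hs
        have := IsSimpleModule.nontrivial A (Z ⧸ N)
        obtain ⟨z, hz⟩ := exists_ne (0 : Z ⧸ N)
        have hmem : ∀ φ : (Z ⧸ N) →ₗ[A] E, (φ z : I) ∈ M := by
          intro φ
          by_contra hcon
          have h0 : ((φ z : E) : I) ≠ 0 := fun h => hcon (h ▸ M.zero_mem)
          refine h0 (hE.2 _ (φ z).2 ?_)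
          rw [Submodule.disjoint_def]
          intro y hy hyM
          obtain ⟨a, rfl⟩ := Submodule.mem_span_singleton.1 hy
          by_cases haz : a • z = 0
          · have : a • φ z = 0 := by rw [← map_smul, haz, map_zero]
            exact congrArg Subtype.val this
          · exfalso
            have : z ∈ Submodule.span A {a • z} := by
              rw [IsSimpleModule.span_singleton_eq_top A haz]; trivial
            obtain ⟨b, hb⟩ := Submodule.mem_span_singleton.1 this
            apply hcon
            have h5 : b • a • φ z = φ z := by rw [← map_smul, ← map_smul, hb]
            have h6 := congrArg Subtype.val h5
            rw [← h6]
            exact M.smul_mem b hyM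
        let ev : ((Z ⧸ N) →ₗ[A] E) →ₗ[R] M :=
          { toFun := fun φ => ⟨φ z, hmem φ⟩
            map_add' := fun _ _ => rfl
            map_smul' := fun _ _ => rfl }
        refine isNoetherian_of_injective ev ?_
        intro φ ψ hφ
        have h1 : φ z = ψ z := Subtype.ext (congrArg (fun t : M => (t : I)) hφ)
        ext1
        refine LinearMap.ext fun x => ?_
        have hx : N.mkQ x ∈ Submodule.span A {z} := by
          rw [IsSimpleModule.span_singleton_eq_top A hz]; trivial
        obtain ⟨a, ha⟩ := Submodule.mem_span_singleton.1 hx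
        change φ (N.mkQ x) = ψ (N.mkQ x)
        rw [← ha, map_smul, map_smul, h1]
      let f : ((Z ⧸ N) →ₗ[A] E) →ₗ[R] (Z →ₗ[A] E) :=
        { toFun := fun φ => φ ∘ₗ N.mkQ
          map_add' := fun _ _ => rfl
          map_smul' := fun _ _ => rfl }
      let g : (Z →ₗ[A] E) →ₗ[R] (N →ₗ[A] E) :=
        { toFun := fun φ => φ ∘ₗ N.subtype
          map_add' := fun _ _ => rfl
          map_smul' := fun _ _ => rfl }
      refine isNoetherian_of_range_eq_ker f g ?_
      ext φ
      constructor
      · rintro ⟨ψ, rfl⟩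
        refine LinearMap.mem_ker.2 (LinearMap.ext fun x => ?_)
        change ψ (N.mkQ x) = 0
        have : N.mkQ (x : Z) = 0 := by simp
        rw [this, map_zero]
      · intro hφ
        refine ⟨N.liftQ φ fun x hx => ?_, ?_⟩
        · exact LinearMap.congr_fun (LinearMap.mem_ker.1 hφ) ⟨x, hx⟩
        · exact N.liftQ_mkQ φ _
  have := key (isFiniteLength_iff_isNoetherian_isArtinian.2 ⟨inferInstance, inferInstance⟩ :
    IsFiniteLength A A)
  let ev : (A →ₗ[A] E) →ₗ[R] E :=
    { toFun := fun φ => φ 1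
      map_add' := fun _ _ => rfl
      map_smul' := fun _ _ => rfl }
  have : Function.Surjective ev := fun x => ⟨LinearMap.toSpanSingleton A E x, by simp [ev]⟩
  have : Module.Finite R E := Module.Finite.of_surjective ev this
  exact Module.Finite.of_restrictScalars_finite R A E

end Part4
end ArtinAlg
namespace ArtinAlg

section Part5
variable {A : Type} [Ring A]

lemma injective_of_retract {X Y : ModuleCat.{0} A} (i : X ⟶ Y) (r : Y ⟶ X) (h : i ≫ r = 𝟙 X)
    (hY : Injective Y) : Injective X := by
  refine ⟨fun {P Q} g f hf => ?_⟩
  refine ⟨Injective.factorThru (g ≫ i) f ≫ r, ?_⟩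
  rw [← Category.assoc, Injective.comp_factorThru, Category.assoc, h, Category.comp_id]

/-- Injective envelopes of finitely generated modules. -/
lemma exists_injEnv (R : Type) [CommRing R] [IsArtinianRing R] [Algebra R A] [Module.Finite R A]
    (M : ModuleCat.{0} A) [Module.Finite A M] :
    ∃ (I : ModuleCat.{0} A) (f : M ⟶ I), Module.Finite A I ∧ IsInjectiveEnvelopeHom A f := by
  let I0 : ModuleCat.{0} A := Injective.under M
  let j : M ⟶ I0 := Injective.ι M
  have hj : Function.Injective j.hom := (ModuleCat.mono_iff_injective j).1 inferInstance
  have hI0 : Module.Injective A I0 :=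
    Module.injective_module_of_injective_object A I0 (inj := inferInstanceAs (Injective I0))
  let M0 : Submodule A I0 := LinearMap.range j.hom
  obtain ⟨E, hE⟩ := exists_max_ess M0
  obtain ⟨π, hπ⟩ := retract_of_max_ess M0 E hE
  have hfin : Module.Finite A E := finite_of_ess R M0 E hE.1
  let f : M →ₗ[A] E := j.hom.codRestrict E fun x => hE.1.1 ⟨x, rfl⟩
  refine ⟨ModuleCat.of A E, ModuleCat.ofHom f, hfin, ?_, ?_, ?_⟩
  · refine injective_of_retract (Y := I0) (ModuleCat.ofHom E.subtype) (ModuleCat.ofHom π) ?_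
      (inferInstanceAs (Injective (Injective.under M)))
    ext x
    exact congrArg _ (hπ x)
  · rw [ModuleCat.mono_iff_injective]
    intro x y hxy
    exact hj (congrArg Subtype.val hxy)
  · intro N g hg
    rw [ModuleCat.mono_iff_injective] at hg ⊢
    rw [injective_iff_map_eq_zero]
    intro x hx
    apply Subtype.ext
    refine hE.1.2 x.1 x.2 ?_
    rw [Submodule.disjoint_def]
    rintro _ hy ⟨m, rfl⟩
    obtain ⟨a, ha⟩ := Submodule.mem_span_singleton.1 hy
    have e1 : f m = a • x := Subtype.ext ha.symm
    have e2 : g.hom (f m) = 0 := by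
      rw [e1, map_smul]
      have : g.hom x = 0 := hx
      rw [this, smul_zero]
    have e3 : m = 0 := by
      apply hg
      rw [map_zero]
      exact e2
    rw [e3, map_zero]

/-- The simple quotients of a finite length module form a finite set up to isomorphism. -/
lemma finite_simples {Z : Type} [AddCommGroup Z] [Module A Z] (hZ : IsFiniteLength A Z) :
    ∃ (n : ℕ) (S : Fin n → ModuleCat.{0} A), (∀ i, IsSimpleModule A (S i)) ∧
      ∀ T : ModuleCat.{0} A, IsSimpleModule A T → ∀ f : Z →ₗ[A] T, f ≠ 0 →
        ∃ i, Nonempty (T ≃ₗ[A] S i) := by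
  induction hZ with
  | of_subsingleton =>
    refine ⟨0, fun i => i.elim0, fun i => i.elim0, fun T hT f hf => ?_⟩
    exact absurd (Subsingleton.elim _ _) hf
  | @of_simple_quotient Z _ _ N hs _ ih =>
    obtain ⟨n, S, hS, h⟩ := ih
    refine ⟨n + 1, Fin.cons (ModuleCat.of A (Z ⧸ N)) S, ?_, ?_⟩
    · intro i
      refine Fin.cases ?_ (fun i => ?_) i
      · exact hs
      · exact hS i
    · intro T hT f hf
      by_cases h0 : f ∘ₗ N.subtype = 0
      · refine ⟨0, ⟨?_⟩⟩
        have hle : N ≤ LinearMap.ker f := fun x hx => LinearMap.congr_fun h0 ⟨x, hx⟩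
        have hne : N.liftQ f hle ≠ 0 := by
          intro h1
          apply hf
          rw [← N.liftQ_mkQ f hle, h1, LinearMap.zero_comp]
        have hb := LinearMap.bijective_of_ne_zero hne
        exact (LinearEquiv.ofBijective _ hb).symm
      · obtain ⟨i, hi⟩ := h T hT _ h0
        exact ⟨i.succ, hi⟩

/-- A complete irredundant finite family of simples. -/
lemma exists_simples [IsArtinianRing A] :
    ∃ (ι : Type) (_ : Fintype ι) (S : ι → ModuleCat.{0} A),
    (∀ i, IsSimpleModule A ↥(S i)) ∧
    (∀ T : ModuleCat.{0} A, IsSimpleModule A ↥T → ∃! i, Nonempty (↥T ≃ₗ[A] ↥(S i))) := by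
  classical
  obtain ⟨n, S, hS, h⟩ := finite_simples (A := A) (Z := A)
    (isFiniteLength_iff_isNoetherian_isArtinian.2 ⟨inferInstance, inferInstance⟩)
  let r : Setoid (Fin n) :=
    { r := fun i j => Nonempty (S i ≃ₗ[A] S j)
      iseqv := ⟨fun i => ⟨LinearEquiv.refl A _⟩, fun ⟨e⟩ => ⟨e.symm⟩,
        fun ⟨e⟩ ⟨e'⟩ => ⟨e.trans e'⟩⟩ }
  refine ⟨Quotient r, Fintype.ofFinite _, fun q => S q.out, fun q => hS _, fun T hT => ?_⟩
  have := hT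
  have := IsSimpleModule.nontrivial A T
  obtain ⟨t, ht⟩ := exists_ne (0 : T)
  obtain ⟨i, ⟨e⟩⟩ := h T hT (LinearMap.toSpanSingleton A T t) (fun h0 => ht (by
    simpa using LinearMap.congr_fun h0 1))
  obtain ⟨e'⟩ : Nonempty (S i ≃ₗ[A] S (Quotient.mk r i).out) :=
    Setoid.symm (Quotient.mk_out (s := r) i)
  refine ⟨Quotient.mk r i, ⟨e.trans e'⟩, ?_⟩
  rintro q ⟨e''⟩
  rw [← Quotient.out_eq q]
  exact Quotient.sound (s := r) ⟨e''.symm.trans e⟩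

/-- The minimal injective cogenerator exists. -/
lemma exists_minInjCogen (R : Type) [CommRing R] [IsArtinianRing R] [Algebra R A]
    [Module.Finite R A] : ∃ Q : ModuleCat.{0} A, IsMinimalInjectiveCogenerator A Q := by
  have : IsArtinianRing A := IsArtinianRing.of_finite R A
  obtain ⟨ι, hι, S, hS, h⟩ := exists_simples (A := A)
  have : ∀ i, Module.Finite A (S i) := fun i => by
    have := hS i
    infer_instance
  have hfin : Module.Finite A (ModuleCat.of A (∀ i, S i)) :=
    inferInstanceAs (Module.Finite A (∀ i, S i))
  obtain ⟨Q, f, -, hf⟩ := exists_injEnv R (ModuleCat.of A (∀ i, S i))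
  exact ⟨Q, ι, hι, S, hS, h, f, hf⟩

lemma minInjCogen_injective {Q : ModuleCat.{0} A} (hQ : IsMinimalInjectiveCogenerator A Q) :
    Injective Q := by
  obtain ⟨ι, hι, S, hS, h, f, hf⟩ := hQ
  exact hf.1

lemma minInjCogen_simple {Q : ModuleCat.{0} A} (hQ : IsMinimalInjectiveCogenerator A Q)
    (T : ModuleCat.{0} A) (hT : IsSimpleModule A T) :
    ∃ g : T →ₗ[A] Q, Function.Injective g := by
  classical
  obtain ⟨ι, hι, S, hS, h, f, hf⟩ := hQ
  obtain ⟨i, ⟨e⟩, -⟩ := h T hT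
  have h1 := (ModuleCat.mono_iff_injective f).1 hf.2.1
  refine ⟨f.hom ∘ₗ LinearMap.single A (fun i => (S i : Type)) i ∘ₗ e.toLinearMap, ?_⟩
  exact h1.comp ((Pi.single_injective i).comp e.injective)

/-- A finitely generated (artinian) module embeds in a finite power of the cogenerator. -/
lemma exists_embed {Q : ModuleCat.{0} A} (hQ : IsMinimalInjectiveCogenerator A Q)
    (I : ModuleCat.{0} A) [IsArtinian A I] :
    ∃ (k : ℕ) (f : I →ₗ[A] (Fin k → Q)), Function.Injective f := by
  have hinj : Module.Injective A Q :=
    Module.injective_module_of_injective_object A Q (inj := minInjCogen_injective hQ)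
  let 𝒮 : Set (Submodule A I) :=
    {K | ∃ (k : ℕ) (f : I →ₗ[A] (Fin k → Q)), LinearMap.ker f = K}
  obtain ⟨K, ⟨k, f, hk⟩, hmin⟩ := (wellFounded_lt (α := Submodule A I)).has_min 𝒮
    ⟨_, 0, 0, rfl⟩
  refine ⟨k, f, ?_⟩
  rw [← LinearMap.ker_eq_bot]
  by_contra hne
  rw [hk] at hne
  obtain ⟨T, hT, hTK⟩ := (eq_bot_or_exists_atom_le K).resolve_left hne
  have hTs : IsSimpleModule A T := isSimpleModule_iff_isAtom.2 hT
  obtain ⟨g, hg⟩ := minInjCogen_simple hQ (ModuleCat.of A T) hTs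
  obtain ⟨h, hh⟩ := Module.Injective.extension_property A Q T I T.subtype T.injective_subtype g
  let f' : I →ₗ[A] (Fin (k + 1) → Q) := LinearMap.pi (Fin.cons h fun i => LinearMap.proj i ∘ₗ f)
  have hf' : ∀ x, f' x = 0 ↔ h x = 0 ∧ f x = 0 := by
    intro x
    constructor
    · intro hx
      refine ⟨congrFun hx 0, funext fun i => congrFun hx i.succ⟩
    · rintro ⟨h1, h2⟩
      funext i
      refine Fin.cases ?_ (fun i => ?_) i
      · exact h1
      · exact congrFun h2 i
  refine hmin (LinearMap.ker f') ⟨_, f', rfl⟩ (lt_of_le_of_ne ?_ ?_)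
  · intro x hx
    rw [← hk]
    exact ((hf' x).1 hx).2
  · intro heq
    apply hT.1
    rw [eq_bot_iff]
    intro t ht
    have h1 : t ∈ LinearMap.ker f' := by rw [heq]; exact hTK ht
    have h2 : h t = 0 := ((hf' t).1 h1).1
    have h3 : g ⟨t, ht⟩ = 0 := by rw [← h2, ← hh]; rfl
    have h4 := hg (h3.trans (map_zero g).symm)
    exact congrArg Subtype.val h4

end Part5
end ArtinAlg
namespace ArtinAlg

section Part6
variable {A : Type} [Ring A]

lemma fin_ext [IsNoetherianRing A] (S : ShortComplex (ModuleCat.{0} A)) (hS : S.ShortExact)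
    (h1 : Module.Finite A S.X₁) (h3 : Module.Finite A S.X₃) : Module.Finite A S.X₂ := by
  have he : Function.Exact S.f.hom S.g.hom := by
    have := hS.exact
    rwa [ShortComplex.ShortExact.moduleCat_exact_iff_function_exact] at this
  have : IsNoetherian A S.X₂ :=
    isNoetherian_of_range_eq_ker S.f.hom S.g.hom (LinearMap.exact_iff.1 he).symm
  infer_instance

lemma fin_sub [IsNoetherianRing A] {X Y : ModuleCat.{0} A} (f : X ⟶ Y) (hf : Mono f)
    (h : Module.Finite A Y) : Module.Finite A X :=
  Module.Finite.of_injective f.hom ((ModuleCat.mono_iff_injective f).1 hf)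

lemma fin_quot {X Y : ModuleCat.{0} A} (f : X ⟶ Y) (hf : Epi f)
    (h : Module.Finite A X) : Module.Finite A Y :=
  Module.Finite.of_surjective f.hom ((ModuleCat.epi_iff_surjective f).1 hf)

/-- The class of finitely generated modules. -/
def FG (A : Type) [Ring A] (X : ModuleCat.{0} A) : Prop := Module.Finite A X

/-- The class of finitely generated modules, in the opposite category. -/
def FGop (A : Type) [Ring A] (X : (ModuleCat.{0} A)ᵒᵖ) : Prop := Module.Finite A X.unop

lemma setup_proj [IsArtinianRing A] :
    SyzSetup (FG A) (fun d M => HasProjectiveDimensionLT M (d + 1)) where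
  enough X hX := by
    have : Module.Finite A X := hX
    obtain ⟨P, f, hP, hf⟩ := exists_projCover X
    exact ⟨P, f, hP, hf.1, hf.2.1⟩
  ext S hS h1 h3 := fin_ext S hS h1 h3
  sub S hS h2 := fin_sub S.f hS.mono_f h2
  D0 M h := projective_iff_hasProjectiveDimensionLT_one.2 h
  Dsucc d S hS h2 h3 := (hS.hasProjectiveDimensionLT_X₃_iff d h2).1 h3
  Dext d S hS h1 h3 := hS.hasProjectiveDimensionLT_X₂ (d + 1) h1
    (hasProjectiveDimensionLT_of_ge S.X₃ 1 (d + 1) (by omega))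

lemma setup_inj (R : Type) [CommRing R] [IsArtinianRing R] [Algebra R A] [Module.Finite R A] :
    SyzSetup (FGop A) (fun d M => HasInjectiveDimensionLT M.unop (d + 1)) where
  enough X hX := by
    have : Module.Finite A X.unop := hX
    obtain ⟨I, f, hI, hf⟩ := exists_injEnv R X.unop
    have h1 := hf.1
    have h2 := hf.2.1
    exact ⟨Opposite.op I, f.op, hI, inferInstance, inferInstanceAs (Epi f.op)⟩
  ext S hS h1 h3 := by
    have : IsArtinianRing A := IsArtinianRing.of_finite R A
    exact fin_ext S.unop hS.unop h3 h1
  sub S hS h2 := fin_quot S.unop.g hS.unop.epi_g h2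
  D0 M h := by
    have : Injective M.unop := injective_iff_hasInjectiveDimensionLT_one.2 h
    exact inferInstanceAs (Projective (Opposite.op M.unop))
  Dsucc d S hS h2 h3 := by
    have h2' : Injective S.unop.X₂ := inferInstanceAs (Injective S.X₂.unop)
    exact (hS.unop.hasInjectiveDimensionLT_X₃_iff d h2').2 h3
  Dext d S hS h1 h3 := by
    have h3' : Injective S.unop.X₁ := inferInstanceAs (Injective S.X₃.unop)
    exact hS.unop.hasInjectiveDimensionLT_X₂ (d + 1)
      (hasInjectiveDimensionLT_of_ge S.unop.X₁ 1 (d + 1) (by omega)) h1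

lemma exists_nthSyzygy [IsArtinianRing A] (n : ℕ) (M : ModuleCat.{0} A)
    (hM : Module.Finite A M) : ∃ X, IsNthSyzygy A n M X ∧ NSyz (FG A) n M X := by
  induction n generalizing M with
  | zero => exact ⟨M, ⟨Iso.refl M⟩, ⟨Iso.refl M⟩⟩
  | succ n ih =>
    obtain ⟨P, f, hP, hf⟩ := exists_projCover M
    have := hf.2.1
    obtain ⟨X, h1, h2⟩ := ih (kernel f) (fin_sub (kernel.ι f) inferInstance hP)
    exact ⟨X, ⟨kernel f, ⟨P, f, hf, ⟨Iso.refl _⟩⟩, h1⟩,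
      ⟨kernel f, ⟨P, _, _, _, shortExact_kernel f, hP, hf.1⟩, h2⟩⟩

lemma exists_nthCosyzygy (R : Type) [CommRing R] [IsArtinianRing R] [Algebra R A]
    [Module.Finite R A] (n : ℕ) (M : ModuleCat.{0} A) (hM : Module.Finite A M) :
    ∃ X, IsNthCosyzygy A n M X ∧ NSyz (FGop A) n (Opposite.op M) (Opposite.op X) := by
  induction n generalizing M with
  | zero => exact ⟨M, ⟨Iso.refl M⟩, ⟨Iso.refl _⟩⟩
  | succ n ih =>
    obtain ⟨I, f, hI, hf⟩ := exists_injEnv R M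
    have h1 := hf.1
    have := hf.2.1
    obtain ⟨X, h1, h2⟩ := ih (cokernel f) (fin_quot (cokernel.π f) inferInstance hI)
    exact ⟨X, ⟨cokernel f, ⟨I, f, hf, ⟨Iso.refl _⟩⟩, h1⟩,
      ⟨Opposite.op (cokernel f), ⟨Opposite.op I, _, _, _, (shortExact_cokernel f).op, hI,
        inferInstance⟩, h2⟩⟩

lemma inAdd_of {G P X Y : ModuleCat.{0} A} {k : ℕ} (i : P →ₗ[A] (Fin k → G))
    (r : (Fin k → G) →ₗ[A] P) (hir : ∀ x, r (i x) = x) (a : X ⟶ Y) (b : Y ⟶ X) (s : X ⟶ P)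
    (t : P ⟶ X) (e : a ≫ b + s ≫ t = 𝟙 X) : InAdd A X (ModuleCat.of A (G × Y)) := by
  let u : X →ₗ[A] (Fin (k + 1) → G × Y) := LinearMap.pi
    (Fin.cons (LinearMap.inr A G Y ∘ₗ a.hom)
      fun j => LinearMap.inl A G Y ∘ₗ LinearMap.proj j ∘ₗ i ∘ₗ s.hom)
  let v : (Fin (k + 1) → G × Y) →ₗ[A] X :=
    b.hom ∘ₗ LinearMap.snd A G Y ∘ₗ LinearMap.proj 0 +
      t.hom ∘ₗ r ∘ₗ LinearMap.pi fun j => LinearMap.fst A G Y ∘ₗ LinearMap.proj j.succ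
  refine ⟨k + 1, ModuleCat.ofHom u, ModuleCat.ofHom v, ?_⟩
  rw [← e]
  ext x
  change b.hom (a.hom x) + t.hom (r (i (s.hom x))) = b.hom (a.hom x) + t.hom (s.hom x)
  rw [hir]

lemma delLE_of [IsArtinianRing A] {S M : ModuleCat.{0} A} (i : S ⟶ M) [Mono i]
    (hM : Module.Finite A M) (n : ℕ) (h : HasProjectiveDimensionLT M (n + 1)) : DelLE A n S := by
  have hQ : Module.Finite A (cokernel i : ModuleCat.{0} A) :=
    fin_quot (cokernel.π i) inferInstance hM
  obtain ⟨X, hX, hX1⟩ := exists_nthSyzygy n S (fin_sub i inferInstance hM)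
  obtain ⟨X', hX', hX1'⟩ := exists_nthSyzygy (n + 1) (cokernel i) hQ
  obtain ⟨P, a, b, s, t, hP, hPP, e⟩ := main_syz (setup_proj (A := A)) n (shortExact_cokernel i)
    hM hQ h hX1 hX1'
  refine ⟨X, hX, cokernel i, hQ, X', hX', ?_⟩
  have hP' : Module.Finite A P := hP
  obtain ⟨k, f, hf⟩ := Module.Finite.exists_fin' A P
  obtain ⟨g, hg⟩ := Module.projective_lifting_property f LinearMap.id hf
  exact inAdd_of (G := ModuleCat.of A A) g f (fun x => LinearMap.congr_fun hg x) a b s t e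

lemma desLE_of (R : Type) [CommRing R] [IsArtinianRing R] [Algebra R A] [Module.Finite R A]
    {S M : ModuleCat.{0} A} (p : M ⟶ S) [Epi p]
    (hM : Module.Finite A M) (n : ℕ) (h : HasInjectiveDimensionLT M (n + 1)) : DesLE A n S := by
  have : IsArtinianRing A := IsArtinianRing.of_finite R A
  have hK : Module.Finite A (kernel p : ModuleCat.{0} A) :=
    fin_sub (kernel.ι p) inferInstance hM
  obtain ⟨X, hX, hX1⟩ := exists_nthCosyzygy R n S (fin_quot p inferInstance hM)
  obtain ⟨X', hX', hX1'⟩ := exists_nthCosyzygy R (n + 1) (kernel p) hK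
  obtain ⟨P, a, b, s, t, hP, hPP, e⟩ := main_syz (setup_inj (A := A) R) n (shortExact_kernel p).op
    hM hK h hX1 hX1'
  obtain ⟨Q, hQ⟩ := exists_minInjCogen (A := A) R
  refine ⟨X, hX, Q, hQ, kernel p, hK, X', hX', ?_⟩
  have hP' : Module.Finite A P.unop := hP
  have hPI : Injective P.unop := inferInstance
  have hPI' : Module.Injective A P.unop := Module.injective_module_of_injective_object A P.unop
  obtain ⟨k, f, hf⟩ := exists_embed hQ P.unop
  obtain ⟨r, hr⟩ := Module.Injective.extension_property A P.unop P.unop (Fin k → Q) f hf LinearMap.id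
  refine inAdd_of (G := Q) f r (fun x => LinearMap.congr_fun hr x) b.unop a.unop t.unop s.unop ?_
  have := congrArg Quiver.Hom.unop e
  simpa using this

end Part6
end ArtinAlg
namespace ArtinAlg

section Part7
variable {A : Type} [Ring A]

lemma EZ_prod_left {G Y N : ModuleCat.{0} A} {n : ℕ} (hG : EZ n G N) (hY : EZ n Y N) :
    EZ n (ModuleCat.of A (G × Y)) N :=
  EZ_contra₂ (shortExact_of_lin (LinearMap.inl A G Y) (LinearMap.snd A G Y)
    LinearMap.inl_injective LinearMap.snd_surjective Function.Exact.inl_snd) hG hY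

lemma EZ_prod_right {G Y N : ModuleCat.{0} A} {n : ℕ} (hG : EZ n N G) (hY : EZ n N Y) :
    EZ n N (ModuleCat.of A (G × Y)) :=
  EZ_co₂ (shortExact_of_lin (LinearMap.inl A G Y) (LinearMap.snd A G Y)
    LinearMap.inl_injective LinearMap.snd_surjective Function.Exact.inl_snd) hG hY

lemma inAdd_decomp {X W : ModuleCat.{0} A} (h : InAdd A X W) :
    ∃ (k : ℕ) (a : Fin k → (X ⟶ W)) (b : Fin k → (W ⟶ X)), ∑ j, a j ≫ b j = 𝟙 X := by
  obtain ⟨k, i, r, hir⟩ := h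
  refine ⟨k, fun j => i ≫ ModuleCat.ofHom (LinearMap.proj j),
    fun j => ModuleCat.ofHom (LinearMap.single A (fun _ => (W : Type)) j) ≫ r, ?_⟩
  have h1 : ∑ j : Fin k, ModuleCat.ofHom (LinearMap.proj (R := A) (φ := fun _ => (W : Type)) j) ≫
      ModuleCat.ofHom (LinearMap.single A (fun _ => (W : Type)) j) =
      𝟙 (ModuleCat.of A (Fin k → W)) := by
    refine ModuleCat.hom_ext (LinearMap.ext fun x => ?_)
    rw [ModuleCat.hom_sum, LinearMap.sum_apply]
    exact Finset.univ_sum_single x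
  calc _ = ∑ j : Fin k, i ≫ (ModuleCat.ofHom (LinearMap.proj (R := A) (φ := fun _ => (W : Type)) j) ≫
      ModuleCat.ofHom (LinearMap.single A (fun _ => (W : Type)) j)) ≫ r := by
        simp only [Category.assoc]
    _ = 𝟙 X := by
        rw [← Preadditive.comp_sum, ← Preadditive.sum_comp, h1, Category.id_comp, hir]

lemma EZ_inAdd_left {X W N : ModuleCat.{0} A} {n : ℕ} (h : InAdd A X W) (hW : EZ n W N) :
    EZ n X N := by
  obtain ⟨k, a, b, hab⟩ := inAdd_decomp h
  exact EZ_retract_left (fun _ => W) a b hab fun _ => hW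

lemma EZ_inAdd_right {X W N : ModuleCat.{0} A} {n : ℕ} (h : InAdd A X W) (hW : EZ n N W) :
    EZ n N X := by
  obtain ⟨k, a, b, hab⟩ := inAdd_decomp h
  exact EZ_retract_right (fun _ => W) a b hab fun _ => hW

lemma EZ_syz {M Y N : ModuleCat.{0} A} (h : IsSyzygyOf A M Y) (k : ℕ) :
    EZ (k + 1) Y N ↔ EZ (k + 2) M N := by
  obtain ⟨P, f, ⟨hP, hf, -⟩, ⟨e⟩⟩ := h
  have hse := shortExact_kernel f
  have hPD : HasProjectiveDimensionLT P 1 := inferInstance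
  constructor
  · intro h
    exact EZ_contra₃ hse (EZ_congr_left e h) (EZ_of_proj 1 _ hPD (by omega))
  · intro h
    exact EZ_congr_left e.symm (EZ_contra₁ hse (EZ_of_proj 1 _ hPD (by omega)) h)

lemma EZ_cosyz {M Y N : ModuleCat.{0} A} (h : IsCosyzygyOf A M Y) (k : ℕ) :
    EZ (k + 1) N Y ↔ EZ (k + 2) N M := by
  obtain ⟨P, f, ⟨hP, hf, -⟩, ⟨e⟩⟩ := h
  have hse := shortExact_cokernel f
  have hPD : HasInjectiveDimensionLT P 1 := inferInstance
  constructor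
  · intro h
    exact EZ_co₁ hse (EZ_congr_right e h) (EZ_of_inj 1 _ hPD (by omega))
  · intro h
    exact EZ_congr_right e.symm (EZ_co₃ hse (EZ_of_inj 1 _ hPD (by omega)) h)

lemma EZ_nthSyz {M X N : ModuleCat.{0} A} (m : ℕ) (h : IsNthSyzygy A m M X) (k : ℕ) :
    EZ (k + 1) X N ↔ EZ (k + m + 1) M N := by
  induction m generalizing M with
  | zero =>
    obtain ⟨e⟩ := h
    exact ⟨EZ_congr_left e, EZ_congr_left e.symm⟩
  | succ m ih =>
    obtain ⟨Y, hY, h⟩ := h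
    rw [ih h, EZ_syz hY]
    rfl

lemma EZ_nthCosyz {M X N : ModuleCat.{0} A} (m : ℕ) (h : IsNthCosyzygy A m M X) (k : ℕ) :
    EZ (k + 1) N X ↔ EZ (k + m + 1) N M := by
  induction m generalizing M with
  | zero =>
    obtain ⟨e⟩ := h
    exact ⟨EZ_congr_right e, EZ_congr_right e.symm⟩
  | succ m ih =>
    obtain ⟨Y, hY, h⟩ := h
    rw [ih h, EZ_cosyz hY]
    rfl

lemma EZ_of_delLE {S N : ModuleCat.{0} A} {m n : ℕ} (h : DelLE A m S) (hmn : m ≤ n)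
    (hN : HasInjectiveDimensionLT N (n + 2)) : EZ (n + 1) S N := by
  obtain ⟨X, hX, M', -, X', hX', hadd⟩ := h
  obtain ⟨k, rfl⟩ := Nat.exists_eq_add_of_le' hmn
  rw [← EZ_nthSyz m hX k]
  refine EZ_inAdd_left hadd (EZ_prod_left (G := ModuleCat.of A A) ?_ ?_)
  · have : HasProjectiveDimensionLT (ModuleCat.of A A) 1 := inferInstance
    exact EZ_of_proj 1 _ this (by omega)
  · rw [EZ_nthSyz (m + 1) hX' k]
    exact EZ_of_inj _ _ hN (by omega)

lemma EZ_of_desLE {S N : ModuleCat.{0} A} {m n : ℕ} (h : DesLE A m S) (hmn : m ≤ n)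
    (hN : HasProjectiveDimensionLT N (n + 2)) : EZ (n + 1) N S := by
  obtain ⟨X, hX, Q, hQ, M', -, X', hX', hadd⟩ := h
  obtain ⟨k, rfl⟩ := Nat.exists_eq_add_of_le' hmn
  rw [← EZ_nthCosyz m hX k]
  refine EZ_inAdd_right hadd (EZ_prod_right (G := Q) ?_ ?_)
  · have := minInjCogen_injective hQ
    have : HasInjectiveDimensionLT Q 1 := inferInstance
    exact EZ_of_inj 1 _ this (by omega)
  · rw [EZ_nthCosyz (m + 1) hX' k]
    exact EZ_of_proj _ _ hN (by omega)

lemma bigInj_le [IsArtinianRing A] (c : ℕ∞)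
    (h : ∀ (k : ℕ) (N S : ModuleCat.{0} A), IsSimpleModule A S →
      HasInjectiveDimensionLT N (k + 2) → ¬ EZ (k + 1) S N → ((k + 1 : ℕ) : ℕ∞) ≤ c) :
    bigFinInjDim A ≤ c := by
  refine sSup_le ?_
  rintro d ⟨N, hN, hd⟩
  obtain ⟨n, rfl⟩ := ENat.ne_top_iff_exists.1 hd
  cases n with
  | zero => simp
  | succ k =>
    have h1 : HasInjectiveDimensionLT N (k + 2) := (injDim_le_iff (k + 1) N).1 hN.le
    have h2 : ¬ HasInjectiveDimensionLT N (k + 1) := by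
      rw [← injDim_le_iff, hN]
      simp only [Nat.cast_le]
      omega
    have h3 : ∃ S : ModuleCat.{0} A, IsSimpleModule A S ∧ ¬ EZ (k + 1) S N := by
      by_contra hcon
      push Not at hcon
      exact h2 (injDim_of_simples k N hcon)
    obtain ⟨S, hS, hE⟩ := h3
    exact h k N S hS h1 hE

lemma bigPro_le [IsArtinianRing A] (c : ℕ∞)
    (h : ∀ (k : ℕ) (N S : ModuleCat.{0} A), IsSimpleModule A S →
      HasProjectiveDimensionLT N (k + 2) → ¬ EZ (k + 1) N S → ((k + 1 : ℕ) : ℕ∞) ≤ c) :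
    bigFinProDim A ≤ c := by
  refine sSup_le ?_
  rintro d ⟨N, hN, hd⟩
  obtain ⟨n, rfl⟩ := ENat.ne_top_iff_exists.1 hd
  cases n with
  | zero => simp
  | succ k =>
    have h1 : HasProjectiveDimensionLT N (k + 2) := (projDim_le_iff (k + 1) N).1 hN.le
    have h2 : ¬ HasProjectiveDimensionLT N (k + 1) := by
      rw [← projDim_le_iff, hN]
      simp only [Nat.cast_le]
      omega
    have h3 : ∃ S : ModuleCat.{0} A, IsSimpleModule A S ∧ ¬ EZ (k + 1) N S := by
      by_contra hcon
      push Not at hcon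
      exact h2 (projDim_of_simples k N hcon)
    obtain ⟨S, hS, hE⟩ := h3
    exact h k N S hS h1 hE

lemma bigInj_le_del [IsArtinianRing A] : bigFinInjDim A ≤ delAlg A := by
  refine bigInj_le _ fun k N S hS hN hE => ?_
  refine le_trans ?_ (le_sSup ⟨S, hS, rfl⟩)
  refine le_sInf ?_
  rintro d ⟨m, rfl, hm⟩
  by_contra hcon
  have : m ≤ k := by
    simp only [Nat.cast_le] at hcon
    omega
  exact hE (EZ_of_delLE hm this hN)

lemma bigPro_le_des [IsArtinianRing A] : bigFinProDim A ≤ desAlg A := by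
  refine bigPro_le _ fun k N S hS hN hE => ?_
  refine le_trans ?_ (le_sSup ⟨S, hS, rfl⟩)
  refine le_sInf ?_
  rintro d ⟨m, rfl, hm⟩
  by_contra hcon
  have : m ≤ k := by
    simp only [Nat.cast_le] at hcon
    omega
  exact hE (EZ_of_desLE hm this hN)

lemma le_of_sub {S M N : ModuleCat.{0} A} (f : S ⟶ M) [Mono f] {k : ℕ}
    (hN : HasInjectiveDimensionLT N (k + 2)) (hE : ¬ EZ (k + 1) S N) :
    ((k + 1 : ℕ) : ℕ∞) ≤ projDim A M := by
  by_contra hcon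
  have h1 : projDim A M ≤ k := by
    rw [not_le] at hcon
    exact Order.le_of_lt_add_one (by simpa using hcon)
  rw [projDim_le_iff] at h1
  exact hE (EZ_contra₁ (shortExact_cokernel f) (EZ_of_proj _ _ h1 le_rfl)
    (EZ_of_inj _ _ hN le_rfl))

lemma le_of_quot {S M N : ModuleCat.{0} A} (f : M ⟶ S) [Epi f] {k : ℕ}
    (hN : HasProjectiveDimensionLT N (k + 2)) (hE : ¬ EZ (k + 1) N S) :
    ((k + 1 : ℕ) : ℕ∞) ≤ injDim A M := by
  by_contra hcon
  have h1 : injDim A M ≤ k := by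
    rw [not_le] at hcon
    exact Order.le_of_lt_add_one (by simpa using hcon)
  rw [injDim_le_iff] at h1
  exact hE (EZ_co₃ (shortExact_kernel f) (EZ_of_inj _ _ h1 le_rfl)
    (EZ_of_proj _ _ hN le_rfl))

end Part7
end ArtinAlg

open ArtinAlg in
/-- Let `A` be an artin algebra. Assume every simple module `S` is a
submodule of a finitely generated module `M_S` of finite projective dimension and a
factor module of a finitely generated module `N_S` of finite injective dimension. Let
`d = max_S pd M_S` and `d' = max_S id N_S`. Then
`fin-pro A = fin-inj A = Fin-pro A = Fin-inj A = del A = des A = d = d'`. -/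
theorem statement_4 (R : Type) [CommRing R] [IsArtinianRing R]
    (A : Type) [Ring A] [Algebra R A] [Module.Finite R A]
    (MS NS : ModuleCat.{0} A → ModuleCat.{0} A)
    (hMS : ∀ S : ModuleCat.{0} A, IsSimpleModule A ↥S →
      Module.Finite A ↥(MS S) ∧ (∃ f : S ⟶ MS S, CategoryTheory.Mono f) ∧
        projDim A (MS S) ≠ ⊤)
    (hNS : ∀ S : ModuleCat.{0} A, IsSimpleModule A ↥S →
      Module.Finite A ↥(NS S) ∧ (∃ f : NS S ⟶ S, CategoryTheory.Epi f) ∧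
        injDim A (NS S) ≠ ⊤)
    (d d' : ℕ∞)
    (hd : d = sSup {x : ℕ∞ |
      ∃ S : ModuleCat.{0} A, IsSimpleModule A ↥S ∧ x = projDim A (MS S)})
    (hd' : d' = sSup {x : ℕ∞ |
      ∃ S : ModuleCat.{0} A, IsSimpleModule A ↥S ∧ x = injDim A (NS S)}) :
    finProDim A = finInjDim A ∧ finInjDim A = bigFinProDim A ∧
      bigFinProDim A = bigFinInjDim A ∧ bigFinInjDim A = delAlg A ∧
      delAlg A = desAlg A ∧ desAlg A = d ∧ d = d' := by
  have hart : IsArtinianRing A := IsArtinianRing.of_finite R A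
  have h1 : d ≤ finProDim A := by
    rw [hd]
    refine sSup_le ?_
    rintro x ⟨S, hS, rfl⟩
    exact le_sSup ⟨MS S, (hMS S hS).1, rfl, (hMS S hS).2.2⟩
  have h1' : d' ≤ finInjDim A := by
    rw [hd']
    refine sSup_le ?_
    rintro x ⟨S, hS, rfl⟩
    exact le_sSup ⟨NS S, (hNS S hS).1, rfl, (hNS S hS).2.2⟩
  have h2 : finProDim A ≤ bigFinProDim A := by
    refine sSup_le ?_
    rintro x ⟨M, -, hM, hx⟩
    exact le_sSup ⟨M, hM, hx⟩
  have h2' : finInjDim A ≤ bigFinInjDim A := by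
    refine sSup_le ?_
    rintro x ⟨M, -, hM, hx⟩
    exact le_sSup ⟨M, hM, hx⟩
  have h3 : bigFinProDim A ≤ d' := by
    refine bigPro_le _ fun k N S hS hN hE => ?_
    obtain ⟨f, hf⟩ := (hNS S hS).2.1
    rw [hd']
    exact (le_of_quot f hN hE).trans (le_sSup ⟨S, hS, rfl⟩)
  have h3' : bigFinInjDim A ≤ d := by
    refine bigInj_le _ fun k N S hS hN hE => ?_
    obtain ⟨f, hf⟩ := (hMS S hS).2.1
    rw [hd]
    exact (le_of_sub f hN hE).trans (le_sSup ⟨S, hS, rfl⟩)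
  have h4 : delAlg A ≤ d := by
    refine sSup_le ?_
    rintro x ⟨S, hS, rfl⟩
    obtain ⟨hfin, ⟨f, hf⟩, hne⟩ := hMS S hS
    obtain ⟨n, hn⟩ := ENat.ne_top_iff_exists.1 hne
    have h5 : delLevel A S ≤ n :=
      sInf_le ⟨n, rfl, delLE_of f hfin n ((projDim_le_iff n _).1 hn.ge)⟩
    rw [hd]
    exact h5.trans (hn.le.trans (le_sSup ⟨S, hS, rfl⟩))
  have h4' : desAlg A ≤ d' := by
    refine sSup_le ?_
    rintro x ⟨S, hS, rfl⟩
    obtain ⟨hfin, ⟨f, hf⟩, hne⟩ := hNS S hS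
    obtain ⟨n, hn⟩ := ENat.ne_top_iff_exists.1 hne
    have h5 : desLevel A S ≤ n :=
      sInf_le ⟨n, rfl, desLE_of R f hfin n ((injDim_le_iff n _).1 hn.ge)⟩
    rw [hd']
    exact h5.trans (hn.le.trans (le_sSup ⟨S, hS, rfl⟩))
  have h6 := bigInj_le_del (A := A)
  have h6' := bigPro_le_des (A := A)
  have hdd : d = d' := le_antisymm (h1.trans (h2.trans h3)) (h1'.trans (h2'.trans h3'))
  subst hdd
  have e1 : finProDim A = d := le_antisymm (h2.trans h3) h1
  have e2 : finInjDim A = d := le_antisymm (h2'.trans h3') h1'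
  have e3 : bigFinProDim A = d := le_antisymm h3 (h1.trans h2)
  have e4 : bigFinInjDim A = d := le_antisymm h3' (h1'.trans h2')
  have e5 : delAlg A = d := le_antisymm h4 (e4 ▸ h6)
  have e6 : desAlg A = d := le_antisymm h4' (e3 ▸ h6')
  rw [e1, e2, e3, e4, e5, e6]
  exact ⟨rfl, rfl, rfl, rfl, rfl, rfl, rfl⟩
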